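/- arXiv:1706.06184 — 3 statements merged into one kernel-verified Lean document; each statement's English description precedes it below -/
import Mathlib

section
/- Let α ∈ (0,1). There is a constant c > 0 depending only on α such that for every n ≥ 2, every r > 0, every Borel subset A of ℝ₊^n, and every C > 0 with μ_α^n(A) > 1/C, one has μ_α^n( x ∉ A + C (log n)^{1/α − 1}( √r B_{ℓ^2} + r B_{ℓ^1} ) + r^{1/α} B_{ℓ^α} ) ≤ e^{−c r} / ( μ_α^n(A) − 1/C ). -/
open MeasureTheory Filter Topology Pointwise

noncomputable section

/-- The (unnormalized) measure on `ℝ` with density `exp (-x^α) 1_{x ≥ 0}`. -/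
def muKernel (α : ℝ) : Measure ℝ :=
  volume.withDensity fun x => if 0 ≤ x then ENNReal.ofReal (Real.exp (-x ^ α)) else 0

/-- The probability measure `μ_α` on `ℝ`. -/
def muAlpha (α : ℝ) : Measure ℝ := (muKernel α Set.univ)⁻¹ • muKernel α

/-- The `n`-fold product measure `μ_α^n` on `ℝ^n`. -/
def muPi (α : ℝ) (n : ℕ) : Measure (Fin n → ℝ) := Measure.pi fun _ => muAlpha α

/-- `‖h‖_{ℓ^p} = (∑ |h i|^p)^(1/p)`. -/
def lpNorm (p : ℝ) {n : ℕ} (h : Fin n → ℝ) : ℝ := (∑ i, |h i| ^ p) ^ (1 / p)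

/-- The unit ball of `ℓ^p` in `ℝ^n`. -/
def lpBall (p : ℝ) (n : ℕ) : Set (Fin n → ℝ) := {h | lpNorm p h ≤ 1}

/-- A smooth even convex cost, quadratic near `0` and linear at infinity. -/
def tauCost (x : ℝ) : ℝ := (Real.sqrt (1 + x ^ 2) - 1) / 8

lemma one_le_sqrt_one_add_sq (x : ℝ) : 1 ≤ Real.sqrt (1 + x ^ 2) :=
  Real.one_le_sqrt.2 (by nlinarith [sq_nonneg x])

lemma tauCost_zero : tauCost 0 = 0 := by simp [tauCost]

lemma tauCost_nonneg (x : ℝ) : 0 ≤ tauCost x := by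
  have := one_le_sqrt_one_add_sq x
  unfold tauCost
  linarith

lemma hasDerivAt_tauCost (x : ℝ) :
    HasDerivAt tauCost (x / Real.sqrt (1 + x ^ 2) / 8) x := by
  have h1 : HasDerivAt (fun x : ℝ => 1 + x ^ 2) (2 * x) x := by
    simpa using (hasDerivAt_pow 2 x).const_add 1
  have h2 := ((h1.sqrt (by positivity)).sub_const 1).div_const 8
  convert! h2 using 1
  field_simp

lemma abs_tauCost_deriv_le (x : ℝ) : |x / Real.sqrt (1 + x ^ 2) / 8| ≤ 1 / 8 := by
  have h : |x| ≤ Real.sqrt (1 + x ^ 2) := Real.abs_le_sqrt (by linarith)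
  have h0 := one_le_sqrt_one_add_sq x
  rw [abs_div, abs_div, abs_of_pos (by linarith : 0 < Real.sqrt (1 + x ^ 2)),
    abs_of_pos (by norm_num : (0 : ℝ) < 8)]
  have : |x| / Real.sqrt (1 + x ^ 2) ≤ 1 := div_le_one_of_le₀ h (by linarith)
  linarith

/-- The differential inequality that makes `tauCost` admissible for the exponential law. -/
lemma one_le_exp_tauCost_mul (x : ℝ) :
    1 ≤ Real.exp (tauCost x) * (1 - 4 * (x / Real.sqrt (1 + x ^ 2) / 8) ^ 2) := by
  have hs := one_le_sqrt_one_add_sq x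
  have hsq : Real.sqrt (1 + x ^ 2) ^ 2 = 1 + x ^ 2 := Real.sq_sqrt (by positivity)
  have he := Real.add_one_le_exp (tauCost x)
  unfold tauCost at he ⊢
  set s := Real.sqrt (1 + x ^ 2)
  have hx : (x / s / 8) ^ 2 = (s ^ 2 - 1) / (64 * s ^ 2) := by
    have : s ≠ 0 := by linarith
    rw [hsq, div_pow, div_pow, hsq]
    field_simp
    ring
  rw [hx]
  have hpos : 0 ≤ 1 - 4 * ((s ^ 2 - 1) / (64 * s ^ 2)) := by
    have : (s ^ 2 - 1) / (64 * s ^ 2) ≤ 1 / 64 := by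
      rw [div_le_div_iff₀ (by positivity) (by norm_num)]
      nlinarith
    linarith
  refine le_trans ?_ (mul_le_mul_of_nonneg_right he hpos)
  have : ((s - 1) / 8 + 1) * (1 - 4 * ((s ^ 2 - 1) / (64 * s ^ 2))) - 1
      = (s - 1) * (16 * s ^ 2 - (s + 1) * (s + 7)) / (128 * s ^ 2) := by
    have : s ≠ 0 := by linarith
    field_simp
    ring
  have h2 : 0 ≤ (s - 1) * (16 * s ^ 2 - (s + 1) * (s + 7)) / (128 * s ^ 2) := by
    apply div_nonneg _ (by positivity)
    apply mul_nonneg (by linarith)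
    nlinarith
  linarith

lemma tauCost_le_tauCost {x y : ℝ} (h : |x| ≤ |y|) : tauCost x ≤ tauCost y := by
  have : Real.sqrt (1 + x ^ 2) ≤ Real.sqrt (1 + y ^ 2) :=
    Real.sqrt_le_sqrt (by linarith [sq_le_sq.2 h])
  unfold tauCost
  linarith

lemma abs_tauCost_sub_le (x y : ℝ) : |tauCost x - tauCost y| ≤ |x - y| := by
  have h := Convex.norm_image_sub_le_of_norm_hasDerivWithin_le (s := Set.univ) (C := 1 / 8)
    (fun z _ => (hasDerivAt_tauCost z).hasDerivWithinAt)
    (fun z _ => abs_tauCost_deriv_le z) convex_univ (Set.mem_univ y) (Set.mem_univ x)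
  simp only [Real.norm_eq_abs] at h
  linarith [abs_nonneg (x - y)]

lemma sq_le_mul_tauCost {x : ℝ} (h : |x| ≤ 1) : x ^ 2 ≤ 24 * tauCost x := by
  have hs := one_le_sqrt_one_add_sq x
  have hsq : Real.sqrt (1 + x ^ 2) ^ 2 = 1 + x ^ 2 := Real.sq_sqrt (by positivity)
  have hx : x ^ 2 ≤ 1 := by rw [← sq_abs]; nlinarith [abs_nonneg x]
  unfold tauCost
  nlinarith

lemma abs_le_mul_tauCost {x : ℝ} (h : 1 ≤ |x|) : |x| ≤ 24 * tauCost x := by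
  have hsq : 1 + |x| / 3 ≤ Real.sqrt (1 + x ^ 2) := by
    apply Real.le_sqrt_of_sq_le
    rw [← sq_abs x]
    nlinarith
  unfold tauCost
  linarith

/-! ### One-dimensional functional inequality -/

lemma strictMono_integral_of_pos {q : ℝ → ℝ} (hq : Continuous q) (hq0 : ∀ x, 0 < q x) :
    StrictMono fun x => ∫ t in (0 : ℝ)..x, q t := by
  intro x y hxy
  have := intervalIntegral.intervalIntegral_pos_of_pos (hq.intervalIntegrable x y) hq0 hxy
  have h2 := intervalIntegral.integral_add_adjacent_intervals
    (hq.intervalIntegrable (μ := volume) 0 x) (hq.intervalIntegrable x y)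
  simp only
  linarith

lemma integral_lt_integral_Ioi {q : ℝ → ℝ} (hq : Continuous q) (hq0 : ∀ x, 0 < q x)
    (hqi : IntegrableOn q (Set.Ioi 0)) (x : ℝ) :
    ∫ t in (0 : ℝ)..x, q t < ∫ t in Set.Ioi 0, q t := by
  have hm := strictMono_integral_of_pos hq hq0
  have ht := intervalIntegral_tendsto_integral_Ioi 0 hqi tendsto_id
  exact (hm (lt_add_one x)).trans_le (hm.monotone.ge_of_tendsto ht (x + 1))

lemma exists_integral_eq {q : ℝ → ℝ} (hq : Continuous q)
    (hqi : IntegrableOn q (Set.Ioi 0)) {v : ℝ} (hv0 : 0 ≤ v) (hv : v < ∫ t in Set.Ioi 0, q t) :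
    ∃ x, 0 ≤ x ∧ ∫ t in (0 : ℝ)..x, q t = v := by
  have ht := intervalIntegral_tendsto_integral_Ioi 0 hqi tendsto_id
  obtain ⟨R, hR, hR0⟩ := ((ht.eventually (lt_mem_nhds hv)).and (eventually_ge_atTop 0)).exists
  have hc : Continuous fun x => ∫ t in (0 : ℝ)..x, q t :=
    intervalIntegral.continuous_primitive (fun a b => hq.intervalIntegrable a b) 0
  obtain ⟨x, hx, hxv⟩ := intermediate_value_Icc hR0 hc.continuousOn
    (show v ∈ Set.Icc _ _ from ⟨by simpa using hv0, hR.le⟩)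
  exact ⟨x, hx.1, hxv⟩

/-- The cumulative hazard `-log` of the tail of the probability density `p` on `(0, ∞)`. -/
def cumHazard (p : ℝ → ℝ) (x : ℝ) : ℝ := -Real.log (1 - ∫ t in (0 : ℝ)..x, p t)

lemma hasDerivAt_cumHazard {p : ℝ → ℝ} (hp : Continuous p) (hp0 : ∀ x, 0 < p x)
    (hpi : IntegrableOn p (Set.Ioi 0)) (hp1 : ∫ t in Set.Ioi 0, p t = 1) (x : ℝ) :
    HasDerivAt (cumHazard p) (p x * Real.exp (cumHazard p x)) x := by
  have hlt := integral_lt_integral_Ioi hp hp0 hpi x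
  rw [hp1] at hlt
  have h := (((hp.integral_hasStrictDerivAt 0 x).hasDerivAt.const_sub 1).log
    (by linarith)).neg
  have he : Real.exp (cumHazard p x) = (1 - ∫ t in (0 : ℝ)..x, p t)⁻¹ := by
    rw [cumHazard, Real.exp_neg, Real.exp_log (by linarith)]
  rw [he]
  convert! h using 1
  ring

/-- A weighted arithmetic-geometric mean inequality, with weights `1 / 2 - d` and `1 / 2 + d`. -/
lemma le_exp_mul_speed {d v w E k : ℝ} (hd : |d| ≤ 1 / 8) (hv : 0 < v) (hw : 0 < w) (hE : 0 < E)
    (hk : k ^ 2 ≤ E ^ 2 * (1 - 4 * d ^ 2) * (v * w)) :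
    k ≤ E * ((1 / 2 - d) * v + (1 / 2 + d) * w) := by
  obtain ⟨h1, h2⟩ := abs_le.1 hd
  have hpos : 0 ≤ (1 / 2 - d) * v + (1 / 2 + d) * w := by
    have := mul_nonneg (by linarith : 0 ≤ 1 / 2 - d) hv.le
    have := mul_nonneg (by linarith : 0 ≤ 1 / 2 + d) hw.le
    linarith
  refine abs_le_of_sq_le_sq' (hk.trans ?_) (mul_nonneg hE.le hpos) |>.2
  rw [mul_pow, mul_assoc]
  refine mul_le_mul_of_nonneg_left ?_ (sq_nonneg _)
  nlinarith [sq_nonneg ((1 / 2 - d) * v - (1 / 2 + d) * w)]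

theorem integral_mul_integral_le_one_of_cumHazard {p f g : ℝ → ℝ} (hp : Continuous p)
    (hp0 : ∀ x, 0 < p x) (hpi : IntegrableOn p (Set.Ioi 0)) (hp1 : ∫ t in Set.Ioi 0, p t = 1)
    (hf : Continuous f) (hf0 : ∀ x, 0 < f x) (hfi : IntegrableOn (fun t => f t * p t) (Set.Ioi 0))
    (hg : Continuous g) (hg0 : ∀ x, 0 < g x) (hgi : IntegrableOn (fun t => g t * p t) (Set.Ioi 0))
    (hfg : ∀ x y, 0 ≤ x → 0 ≤ y →
      f x * g y ≤ Real.exp (tauCost (cumHazard p x - cumHazard p y))) :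
    (∫ t in Set.Ioi 0, f t * p t) * (∫ t in Set.Ioi 0, g t * p t) ≤ 1 := by
  set S := cumHazard p with hS
  have hfp : Continuous fun t => f t * p t := hf.mul hp
  have hgp : Continuous fun t => g t * p t := hg.mul hp
  have hfp0 : ∀ x, 0 < f x * p x := fun x => mul_pos (hf0 x) (hp0 x)
  have hgp0 : ∀ x, 0 < g x * p x := fun x => mul_pos (hg0 x) (hp0 x)
  set F : ℝ → ℝ := fun x => ∫ t in (0 : ℝ)..x, f t * p t with hF
  set G : ℝ → ℝ := fun x => ∫ t in (0 : ℝ)..x, g t * p t with hG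
  set Ft := ∫ t in Set.Ioi 0, f t * p t with hFt
  set Gt := ∫ t in Set.Ioi 0, g t * p t with hGt
  have hF0 : F 0 = 0 := by simp [hF]
  have hG0 : G 0 = 0 := by simp [hG]
  have hFlt : ∀ x, F x < Ft := integral_lt_integral_Ioi hfp hfp0 hfi
  have hGlt : ∀ x, G x < Gt := integral_lt_integral_Ioi hgp hgp0 hgi
  have hFpos : 0 < Ft := hF0 ▸ hFlt 0
  have hGpos : 0 < Gt := hG0 ▸ hGlt 0
  have hFmono : StrictMono F := strictMono_integral_of_pos hfp hfp0
  have hGmono : StrictMono G := strictMono_integral_of_pos hgp hgp0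
  have hFd : ∀ x, HasDerivAt F (f x * p x) x := fun x =>
    (hfp.integral_hasStrictDerivAt 0 x).hasDerivAt
  set κ := Gt / Ft with hκ
  have hκ0 : 0 < κ := div_pos hGpos hFpos
  set τ : ℝ → ℝ := fun x => Function.invFun G (κ * F x) with hτ
  have hinv : Function.LeftInverse (Function.invFun G) G :=
    Function.leftInverse_invFun hGmono.injective
  have hex : ∀ x, 0 ≤ x → 0 ≤ τ x ∧ G (τ x) = κ * F x := by
    intro x hx
    have h0 : 0 ≤ κ * F x := mul_nonneg hκ0.le (hF0 ▸ hFmono.monotone hx)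
    have h1 : κ * F x < Gt := by
      calc κ * F x < κ * Ft := mul_lt_mul_of_pos_left (hFlt x) hκ0
        _ = Gt := by rw [hκ]; field_simp
    obtain ⟨y, hy, hyx⟩ := exists_integral_eq hgp hgi h0 h1
    have : τ x = y := by
      change Function.invFun G (κ * F x) = y
      rw [← hyx]
      exact hinv y
    rw [this]
    exact ⟨hy, hyx⟩
  have hτ0 : τ 0 = 0 := by
    have := hinv 0
    rw [hG0] at this
    simp only [hτ, hF0, mul_zero, this]
  have hτd : ∀ x, 0 ≤ x → HasDerivAt τ ((g (τ x) * p (τ x))⁻¹ * (κ * (f x * p x))) x := by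
    intro x hx
    have h1 : HasDerivAt (Function.invFun G) (g (τ x) * p (τ x))⁻¹ (κ * F x) := by
      rw [← (hex x hx).2]
      exact ((hgp.integral_hasStrictDerivAt 0 (τ x)).to_local_left_inverse (hgp0 _).ne'
        (Eventually.of_forall hinv)).hasDerivAt
    exact h1.comp x ((hFd x).const_mul κ)
  have hSd : ∀ x, HasDerivAt S (p x * Real.exp (S x)) x :=
    hasDerivAt_cumHazard hp hp0 hpi hp1
  set z : ℝ → ℝ := fun x => (S x + S (τ x)) / 2 - tauCost (S x - S (τ x)) with hz
  set d : ℝ → ℝ := fun x =>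
    (S x - S (τ x)) / Real.sqrt (1 + (S x - S (τ x)) ^ 2) / 8 with hd
  set v : ℝ → ℝ := fun x => p x * Real.exp (S x) with hv
  set w : ℝ → ℝ := fun x => p (τ x) * Real.exp (S (τ x)) *
    ((g (τ x) * p (τ x))⁻¹ * (κ * (f x * p x))) with hw
  have hzd : ∀ x, 0 ≤ x → HasDerivAt z ((1 / 2 - d x) * v x + (1 / 2 + d x) * w x) x := by
    intro x hx
    have hSτ : HasDerivAt (fun x => S (τ x)) (w x) x := (hSd (τ x)).comp x (hτd x hx)
    have h2 := (hasDerivAt_tauCost (S x - S (τ x))).comp x ((hSd x).sub hSτ)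
    convert! (((hSd x).add hSτ).div_const 2).sub h2 using 1
    simp only [hd, hv]
    ring
  have hz0 : z 0 = 0 := by simp [hz, hτ0, hS, cumHazard, tauCost_zero]
  have hkey : ∀ x, 0 ≤ x → Real.sqrt κ * (f x * p x) ≤
      Real.exp (-z x) * ((1 / 2 - d x) * v x + (1 / 2 + d x) * w x) := by
    intro x hx
    have hpx := hp0 x
    have hpt := hp0 (τ x)
    have hfx := hf0 x
    have hgt := hg0 (τ x)
    refine le_exp_mul_speed (abs_tauCost_deriv_le _) (by positivity) (by positivity)
      (Real.exp_pos _) ?_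
    have hE : Real.exp (-z x) ^ 2 * (Real.exp (S x) * Real.exp (S (τ x))) =
        Real.exp (tauCost (S x - S (τ x))) * Real.exp (tauCost (S x - S (τ x))) := by
      rw [sq, ← Real.exp_add, ← Real.exp_add, ← Real.exp_add, ← Real.exp_add]
      congr 1
      simp only [hz]
      ring
    have h1 := one_le_exp_tauCost_mul (S x - S (τ x))
    have h2 := hfg x (τ x) hx (hex x hx).1
    have hvw : Real.exp (-z x) ^ 2 * (1 - 4 * d x ^ 2) * (v x * w x) =
        (Real.exp (-z x) ^ 2 * (Real.exp (S x) * Real.exp (S (τ x)))) * (1 - 4 * d x ^ 2) *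
          (κ * f x * p x ^ 2 / g (τ x)) := by
      simp only [hv, hw]
      field_simp
    rw [hvw, hE, mul_pow, Real.sq_sqrt hκ0.le]
    have h3 : f x ≤ Real.exp (tauCost (S x - S (τ x))) / g (τ x) := by
      rwa [le_div_iff₀ hgt]
    calc κ * (f x * p x) ^ 2 = (κ * f x * p x ^ 2) * f x := by ring
      _ ≤ (κ * f x * p x ^ 2) * (Real.exp (tauCost (S x - S (τ x))) / g (τ x)) :=
          mul_le_mul_of_nonneg_left h3 (by positivity)
      _ = Real.exp (tauCost (S x - S (τ x))) * (κ * f x * p x ^ 2 / g (τ x)) * 1 := by ring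
      _ ≤ Real.exp (tauCost (S x - S (τ x))) * (κ * f x * p x ^ 2 / g (τ x)) *
          (Real.exp (tauCost (S x - S (τ x))) * (1 - 4 * d x ^ 2)) :=
          mul_le_mul_of_nonneg_left h1 (by positivity)
      _ = _ := by ring
  have hmono : MonotoneOn (fun x => -Real.exp (-z x) - Real.sqrt κ * F x) (Set.Ici 0) := by
    have hder : ∀ x, 0 ≤ x → HasDerivAt (fun x => -Real.exp (-z x) - Real.sqrt κ * F x)
        (Real.exp (-z x) * ((1 / 2 - d x) * v x + (1 / 2 + d x) * w x)
          - Real.sqrt κ * (f x * p x)) x := by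
      intro x hx
      convert! ((hzd x hx).neg.exp.neg).sub ((hFd x).const_mul (Real.sqrt κ)) using 1
      simp only [Pi.neg_apply]
      ring
    refine monotoneOn_of_deriv_nonneg (convex_Ici 0)
      (fun x hx => (hder x hx).continuousAt.continuousWithinAt) ?_ ?_
    · intro x hx
      exact (hder x (interior_subset hx)).differentiableAt.differentiableWithinAt
    · intro x hx
      rw [(hder x (interior_subset hx)).deriv]
      linarith [hkey x (interior_subset hx)]
  have hbound : ∀ R, 0 ≤ R → Real.sqrt κ * F R ≤ 1 := by
    intro R hR
    have := hmono (Set.mem_Ici.2 le_rfl) hR hR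
    simp only [hz0, hF0, neg_zero, Real.exp_zero, mul_zero, sub_zero] at this
    linarith [Real.exp_pos (-z R)]
  have hlim : Tendsto F atTop (𝓝 Ft) := intervalIntegral_tendsto_integral_Ioi 0 hfi tendsto_id
  have hle : Real.sqrt κ * Ft ≤ 1 :=
    le_of_tendsto (hlim.const_mul _) ((eventually_ge_atTop 0).mono hbound)
  have hsq : (Real.sqrt κ * Ft) ^ 2 = Ft * Gt := by
    rw [mul_pow, Real.sq_sqrt hκ0.le, hκ]
    field_simp
  rw [← hsq]
  exact pow_le_one₀ (by positivity) hle

/-! ### Tensorization -/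

lemma integral_pi_succ {μ : Measure ℝ} [IsProbabilityMeasure μ] {n : ℕ}
    {f : (Fin (n + 1) → ℝ) → ℝ} (hf : Integrable f (Measure.pi fun _ => μ)) :
    ∫ x, f x ∂(Measure.pi fun _ => μ) =
      ∫ t, ∫ x, f (Fin.cons t x) ∂(Measure.pi fun _ : Fin n => μ) ∂μ := by
  have hmp := (measurePreserving_piFinSuccAbove (fun _ : Fin (n + 1) => μ) 0).symm
  have hemb := (MeasurableEquiv.piFinSuccAbove (fun _ : Fin (n + 1) => ℝ) 0).symm.measurableEmbedding
  rw [← hmp.integral_comp hemb, integral_prod]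
  · simp [MeasurableEquiv.piFinSuccAbove_symm_apply, Fin.consEquiv]
  · exact (hmp.integrable_comp_emb hemb).2 hf

lemma Continuous.integrable_of_pos_le {X : Type*} [TopologicalSpace X] [MeasurableSpace X]
    [OpensMeasurableSpace X] {μ : Measure X} [IsFiniteMeasure μ] {f : X → ℝ}
    (hf : Continuous f) (hf0 : ∀ x, 0 < f x) {M : ℝ} (hfM : ∀ x, f x ≤ M) : Integrable f μ :=
  Integrable.of_bound hf.measurable.aestronglyMeasurable M
    (ae_of_all _ fun x => by rw [Real.norm_eq_abs, abs_of_pos (hf0 x)]; exact hfM x)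

lemma integral_pos_of_continuous_of_pos {X : Type*} [TopologicalSpace X] [MeasurableSpace X]
    [OpensMeasurableSpace X] {μ : Measure X} [IsProbabilityMeasure μ] {f : X → ℝ}
    (hf : Continuous f) (hf0 : ∀ x, 0 < f x) {M : ℝ} (hfM : ∀ x, f x ≤ M) : 0 < ∫ x, f x ∂μ := by
  rw [integral_pos_iff_support_of_nonneg (fun x => (hf0 x).le) (hf.integrable_of_pos_le hf0 hfM)]
  have : Function.support f = Set.univ := Set.eq_univ_of_forall fun x => (hf0 x).ne'
  simp [this]

lemma integral_le_of_le {X : Type*} [MeasurableSpace X] {μ : Measure X} [IsProbabilityMeasure μ]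
    {f : X → ℝ} (hf : Integrable f μ) {M : ℝ} (hfM : ∀ x, f x ≤ M) : ∫ x, f x ∂μ ≤ M := by
  simpa using integral_mono hf (integrable_const M) hfM

theorem integral_pi_mul_integral_pi_le_one {μ : Measure ℝ} [IsProbabilityMeasure μ]
    {c : ℝ → ℝ → ℝ}
    (h1 : ∀ f g : ℝ → ℝ, Continuous f → Continuous g → (∀ x, 0 < f x) → (∀ x, 0 < g x) →
      (∃ M, ∀ x, f x ≤ M) → (∃ M, ∀ x, g x ≤ M) → (∀ x y, f x * g y ≤ Real.exp (c x y)) →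
      (∫ x, f x ∂μ) * (∫ x, g x ∂μ) ≤ 1) (n : ℕ) :
    ∀ f g : (Fin n → ℝ) → ℝ, Continuous f → Continuous g → (∀ x, 0 < f x) → (∀ x, 0 < g x) →
      (∃ M, ∀ x, f x ≤ M) → (∃ M, ∀ x, g x ≤ M) →
      (∀ x y, f x * g y ≤ Real.exp (∑ i, c (x i) (y i))) →
      (∫ x, f x ∂(Measure.pi fun _ => μ)) * (∫ x, g x ∂(Measure.pi fun _ => μ)) ≤ 1 := by
  induction n with
  | zero =>
    intro f g _ _ _ _ _ _ h
    have := h default default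
    simpa [Measure.pi_of_empty _ (default : Fin 0 → ℝ), integral_dirac] using this
  | succ n ih =>
    intro f g hf hg hf0 hg0 ⟨M, hM⟩ ⟨N, hN⟩ h
    have hcons : Continuous fun q : ℝ × (Fin n → ℝ) => (Fin.cons q.1 q.2 : Fin (n + 1) → ℝ) := by
      refine continuous_pi fun i => ?_
      refine Fin.cases ?_ (fun j => ?_) i
      · simpa using continuous_fst
      · simp only [Fin.cons_succ]
        fun_prop
    have slice : ∀ φ : (Fin (n + 1) → ℝ) → ℝ, Continuous φ → ∀ t : ℝ,
        Continuous fun x : Fin n → ℝ => φ (Fin.cons t x) := fun φ hφ t =>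
      hφ.comp (hcons.comp (Continuous.prodMk_right t))
    have marginal : ∀ φ : (Fin (n + 1) → ℝ) → ℝ, Continuous φ → (∀ x, 0 < φ x) → ∀ K : ℝ,
        (∀ x, φ x ≤ K) →
        Continuous fun t => ∫ x, φ (Fin.cons t x) ∂(Measure.pi fun _ : Fin n => μ) := by
      intro φ hφ hφ0 K hK
      refine continuous_of_dominated (bound := fun _ => K) (fun t => ?_) (fun t => ?_)
        (integrable_const K) (ae_of_all _ fun x => ?_)
      · exact (slice φ hφ t).measurable.aestronglyMeasurable
      · exact ae_of_all _ fun x => by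
          rw [Real.norm_eq_abs, abs_of_pos (hφ0 _)]; exact hK _
      · exact hφ.comp (hcons.comp (Continuous.prodMk_left x))
    rw [integral_pi_succ (hf.integrable_of_pos_le hf0 hM),
      integral_pi_succ (hg.integrable_of_pos_le hg0 hN)]
    refine h1 _ _ (marginal f hf hf0 M hM) (marginal g hg hg0 N hN)
      (fun t => integral_pos_of_continuous_of_pos (slice f hf t) (fun x => hf0 _) fun x => hM _)
      (fun t => integral_pos_of_continuous_of_pos (slice g hg t) (fun x => hg0 _) fun x => hN _)
      ⟨M, fun t => integral_le_of_le
        ((slice f hf t).integrable_of_pos_le (fun x => hf0 _) fun x => hM _) fun x => hM _⟩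
      ⟨N, fun t => integral_le_of_le
        ((slice g hg t).integrable_of_pos_le (fun x => hg0 _) fun x => hN _) fun x => hN _⟩ ?_
    intro s t
    have := ih (fun x => f (Fin.cons s x)) (fun x => g (Fin.cons t x) * Real.exp (-c s t))
      (slice f hf s) ((slice g hg t).mul continuous_const) (fun x => hf0 _)
      (fun x => mul_pos (hg0 _) (Real.exp_pos _)) ⟨M, fun x => hM _⟩
      ⟨N * Real.exp (-c s t), fun x => mul_le_mul_of_nonneg_right (hN _) (Real.exp_pos _).le⟩ ?_
    · rw [integral_mul_const, ← mul_assoc, Real.exp_neg, ← div_eq_mul_inv,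
        div_le_one (Real.exp_pos _)] at this
      exact this
    · intro x y
      have hxy := h (Fin.cons s x) (Fin.cons t y)
      rw [Fin.sum_univ_succ, Real.exp_add] at hxy
      simp only [Fin.cons_zero, Fin.cons_succ] at hxy
      rw [← mul_assoc, Real.exp_neg, ← div_eq_mul_inv, div_le_iff₀ (Real.exp_pos _)]
      linarith

/-! ### Enlargements -/

/-- The infimum over `k ∈ A` of `∑ φ (v i - V (k i))`. -/
def infCost (φ V : ℝ → ℝ) {n : ℕ} (A : Set (Fin n → ℝ)) (v : Fin n → ℝ) : ℝ :=
  ⨅ k : A, ∑ i, φ (v i - V (k.1 i))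

lemma infCost_le {φ V : ℝ → ℝ} (hφ : ∀ x, 0 ≤ φ x) {n : ℕ} {A : Set (Fin n → ℝ)}
    {k : Fin n → ℝ} (hk : k ∈ A) (v : Fin n → ℝ) :
    infCost φ V A v ≤ ∑ i, φ (v i - V (k i)) :=
  ciInf_le (f := fun k : A => ∑ i, φ (v i - V (k.1 i)))
    ⟨0, by rintro _ ⟨k, rfl⟩; exact Finset.sum_nonneg fun i _ => hφ _⟩ ⟨k, hk⟩

lemma sum_le_sum_add_sum_abs {φ : ℝ → ℝ} (hφ : ∀ x y, |φ x - φ y| ≤ |x - y|) {n : ℕ}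
    (a b k : Fin n → ℝ) :
    ∑ i, φ (a i - k i) ≤ ∑ i, φ (b i - k i) + ∑ i, |a i - b i| := by
  rw [← Finset.sum_add_distrib]
  refine Finset.sum_le_sum fun i _ => ?_
  have := (abs_le.1 (hφ (a i - k i) (b i - k i))).2
  rw [sub_sub_sub_cancel_right] at this
  linarith

lemma continuous_infCost {φ V : ℝ → ℝ} (hφ : ∀ x, 0 ≤ φ x)
    (hφL : ∀ x y, |φ x - φ y| ≤ |x - y|) {n : ℕ} {A : Set (Fin n → ℝ)} (hA : A.Nonempty) :
    Continuous (infCost φ V A) := by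
  have : Nonempty A := hA.to_subtype
  have : LipschitzWith n (infCost φ V A) := by
    refine LipschitzWith.of_le_add_mul _ fun a b => ?_
    have hsum : ∑ i, |a i - b i| ≤ n * dist a b := by
      calc ∑ i, |a i - b i| ≤ ∑ _i : Fin n, dist a b :=
            Finset.sum_le_sum fun i _ => dist_le_pi_dist a b i
        _ = n * dist a b := by simp
    rw [← sub_le_iff_le_add]
    refine le_ciInf fun k => ?_
    have h1 := infCost_le (V := V) hφ k.2 a
    have h2 := sum_le_sum_add_sum_abs hφL a b (fun i => V (k.1 i))
    simp only [NNReal.coe_natCast]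
    linarith
  exact this.continuous

theorem measureReal_mul_measureReal_le_exp_neg {μ : Measure ℝ} [IsProbabilityMeasure μ]
    {V : ℝ → ℝ} (hV : Continuous V)
    (h1 : ∀ f g : ℝ → ℝ, Continuous f → Continuous g → (∀ x, 0 < f x) → (∀ x, 0 < g x) →
      (∃ M, ∀ x, f x ≤ M) → (∃ M, ∀ x, g x ≤ M) →
      (∀ x y, f x * g y ≤ Real.exp (tauCost (V x - V y))) →
      (∫ x, f x ∂μ) * (∫ x, g x ∂μ) ≤ 1)
    {n : ℕ} {A : Set (Fin n → ℝ)} (hA : A.Nonempty) {ρ : ℝ} (hρ : 0 ≤ ρ) :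
    (Measure.pi fun _ => μ).real {x | ∀ k ∈ A, ρ ≤ ∑ i, tauCost (V (x i) - V (k i))} *
      (Measure.pi fun _ => μ).real A ≤ Real.exp (-ρ) := by
  have : Nonempty A := hA.to_subtype
  set ν : Measure (Fin n → ℝ) := Measure.pi fun _ => μ with hν
  have hVn : Continuous fun x : Fin n → ℝ => fun i => V (x i) :=
    continuous_pi fun i => hV.comp (continuous_apply i)
  set D : (Fin n → ℝ) → ℝ := fun x => infCost tauCost V A fun i => V (x i) with hD
  set d : (Fin n → ℝ) → ℝ := fun x => infCost (fun t => |t|) V A fun i => V (x i) with hd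
  have hDc : Continuous D := (continuous_infCost tauCost_nonneg abs_tauCost_sub_le hA).comp hVn
  have hdc : Continuous d := (continuous_infCost abs_nonneg abs_abs_sub_abs_le hA).comp hVn
  have hD0 : ∀ x, 0 ≤ D x := fun x =>
    le_ciInf fun k => Finset.sum_nonneg fun i _ => tauCost_nonneg _
  have hd0 : ∀ x, 0 ≤ d x := fun x => le_ciInf fun k => Finset.sum_nonneg fun i _ => abs_nonneg _
  set f : (Fin n → ℝ) → ℝ := fun x => Real.exp (min ρ (D x)) with hf
  set g : (Fin n → ℝ) → ℝ := fun y => Real.exp (-min ρ (d y)) with hg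
  have hfc : Continuous f := Real.continuous_exp.comp (continuous_const.min hDc)
  have hgc : Continuous g := Real.continuous_exp.comp (continuous_const.min hdc).neg
  have hf0 : ∀ x, 0 < f x := fun x => Real.exp_pos _
  have hg0 : ∀ x, 0 < g x := fun x => Real.exp_pos _
  have hfM : ∀ x, f x ≤ Real.exp ρ := fun x => Real.exp_le_exp.2 (min_le_left _ _)
  have hgM : ∀ x, g x ≤ 1 := fun x =>
    Real.exp_le_one_iff.2 (neg_nonpos.2 (le_min hρ (hd0 x)))
  have hfg : ∀ x y, f x * g y ≤ Real.exp (∑ i, tauCost (V (x i) - V (y i))) := by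
    intro x y
    rw [hf, hg, ← Real.exp_add, Real.exp_le_exp]
    have hW : 0 ≤ ∑ i, tauCost (V (x i) - V (y i)) :=
      Finset.sum_nonneg fun i _ => tauCost_nonneg _
    have hkey : D x - ∑ i, tauCost (V (x i) - V (y i)) ≤ d y := by
      refine le_ciInf fun k => ?_
      have h2 := infCost_le (V := V) tauCost_nonneg k.2 fun i => V (x i)
      have h3 := sum_le_sum_add_sum_abs (n := n) abs_tauCost_sub_le
        (fun i => V (x i) - V (k.1 i)) (fun i => V (x i) - V (y i)) 0
      simp only [Pi.zero_apply, sub_zero, sub_sub_sub_cancel_left] at h3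
      linarith
    rcases le_total ρ (d y) with h | h
    · rw [min_eq_left h]
      linarith [min_le_left ρ (D x)]
    · rw [min_eq_right h]
      linarith [min_le_right ρ (D x)]
  have hmain := integral_pi_mul_integral_pi_le_one h1 n f g hfc hgc hf0 hg0 ⟨_, hfM⟩ ⟨_, hgM⟩ hfg
  have hfi : Integrable f ν := hfc.integrable_of_pos_le hf0 hfM
  have hgi : Integrable g ν := hgc.integrable_of_pos_le hg0 hgM
  have hE : Real.exp ρ * ν.real {x | ∀ k ∈ A, ρ ≤ ∑ i, tauCost (V (x i) - V (k i))} ≤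
      ∫ x, f x ∂ν := by
    refine le_trans (mul_le_mul_of_nonneg_left (measureReal_mono ?_) (Real.exp_pos _).le)
      (mul_meas_ge_le_integral_of_nonneg (ae_of_all _ fun x => (hf0 x).le) hfi (Real.exp ρ))
    intro x hx
    exact Real.exp_le_exp.2 (le_min le_rfl (le_ciInf fun k => hx k.1 k.2))
  have hAle : 1 * ν.real A ≤ ∫ x, g x ∂ν := by
    refine le_trans (mul_le_mul_of_nonneg_left (measureReal_mono ?_) zero_le_one)
      (mul_meas_ge_le_integral_of_nonneg (ae_of_all _ fun x => (hg0 x).le) hgi 1)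
    intro x hx
    have h0 : d x ≤ 0 := by
      simpa using infCost_le (V := V) abs_nonneg hx fun i => V (x i)
    exact Real.one_le_exp (neg_nonneg.2 ((min_le_right _ _).trans h0))
  rw [one_mul] at hAle
  have hprod := mul_le_mul hE hAle measureReal_nonneg (by positivity)
  rw [Real.exp_neg, ← one_div, le_div_iff₀ (Real.exp_pos _)]
  linarith

/-! ### The measure `muAlpha` -/

/-- The density of `muAlpha α` on `(0, ∞)`. -/
def muDensity (α x : ℝ) : ℝ := Real.exp (-x ^ α) / ∫ t in Set.Ioi (0 : ℝ), Real.exp (-t ^ α)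

lemma continuous_exp_neg_rpow {α : ℝ} (hα : 0 < α) : Continuous fun x : ℝ => Real.exp (-x ^ α) :=
  Real.continuous_exp.comp (Real.continuous_rpow_const hα.le).neg

lemma integrableOn_exp_neg_rpow {α : ℝ} (hα : 0 < α) :
    IntegrableOn (fun x : ℝ => Real.exp (-x ^ α)) (Set.Ioi 0) := by
  simpa using integrableOn_rpow_mul_exp_neg_rpow (s := 0) (by norm_num) hα

lemma integral_exp_neg_rpow_pos {α : ℝ} (hα : 0 < α) :
    0 < ∫ t in Set.Ioi (0 : ℝ), Real.exp (-t ^ α) := by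
  simpa using integral_lt_integral_Ioi (continuous_exp_neg_rpow hα) (fun x => Real.exp_pos _)
    (integrableOn_exp_neg_rpow hα) 0

lemma continuous_muDensity {α : ℝ} (hα : 0 < α) : Continuous (muDensity α) :=
  (continuous_exp_neg_rpow hα).div_const _

lemma muDensity_pos {α : ℝ} (hα : 0 < α) (x : ℝ) : 0 < muDensity α x :=
  div_pos (Real.exp_pos _) (integral_exp_neg_rpow_pos hα)

lemma integrableOn_muDensity {α : ℝ} (hα : 0 < α) : IntegrableOn (muDensity α) (Set.Ioi 0) :=
  (integrableOn_exp_neg_rpow hα).div_const _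

lemma integral_muDensity {α : ℝ} (hα : 0 < α) : ∫ x in Set.Ioi 0, muDensity α x = 1 := by
  simp only [muDensity]
  rw [integral_div, div_self (integral_exp_neg_rpow_pos hα).ne']

lemma muKernel_eq_withDensity (α : ℝ) :
    muKernel α = (volume.restrict (Set.Ioi 0)).withDensity
      fun x => ENNReal.ofReal (Real.exp (-x ^ α)) := by
  rw [Measure.restrict_congr_set Ioi_ae_eq_Ici, ← withDensity_indicator measurableSet_Ici]
  rfl

lemma muKernel_univ {α : ℝ} (hα : 0 < α) :
    muKernel α Set.univ = ENNReal.ofReal (∫ t in Set.Ioi (0 : ℝ), Real.exp (-t ^ α)) := by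
  rw [muKernel_eq_withDensity, withDensity_apply _ MeasurableSet.univ, Measure.restrict_univ,
    ofReal_integral_eq_lintegral_ofReal (integrableOn_exp_neg_rpow hα)
      (ae_of_all _ fun x => (Real.exp_pos _).le)]

lemma isProbabilityMeasure_muAlpha {α : ℝ} (hα : 0 < α) : IsProbabilityMeasure (muAlpha α) := by
  constructor
  rw [muAlpha, Measure.smul_apply, smul_eq_mul, muKernel_univ hα]
  exact ENNReal.inv_mul_cancel (ENNReal.ofReal_pos.2 (integral_exp_neg_rpow_pos hα)).ne'
    ENNReal.ofReal_ne_top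

lemma integral_muAlpha {α : ℝ} (hα : 0 < α) (f : ℝ → ℝ) :
    ∫ x, f x ∂(muAlpha α) = ∫ x in Set.Ioi 0, f x * muDensity α x := by
  rw [muAlpha, integral_smul_measure, muKernel_univ hα, muKernel_eq_withDensity,
    integral_withDensity_eq_integral_toReal_smul
      (continuous_exp_neg_rpow hα).measurable.ennreal_ofReal
      (ae_of_all _ fun x => ENNReal.ofReal_lt_top), ENNReal.toReal_inv,
    ENNReal.toReal_ofReal (integral_exp_neg_rpow_pos hα).le, ← integral_smul]
  refine integral_congr_ae (ae_of_all _ fun x => ?_)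
  simp only [smul_eq_mul, muDensity, ENNReal.toReal_ofReal (Real.exp_pos _).le]
  ring

lemma muAlpha_real_Ioi {α : ℝ} (hα : 0 < α) {t : ℝ} (ht : 0 ≤ t) :
    (muAlpha α).real (Set.Ioi t) = 1 - ∫ x in (0 : ℝ)..t, muDensity α x := by
  rw [← integral_indicator_one measurableSet_Ioi, integral_muAlpha hα]
  have h1 : (fun x => (Set.Ioi t).indicator (1 : ℝ → ℝ) x * muDensity α x) =
      (Set.Ioi t).indicator (muDensity α) := by
    ext x
    by_cases hx : x ∈ Set.Ioi t <;> simp [hx]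
  rw [h1, setIntegral_indicator measurableSet_Ioi, Set.Ioi_inter_Ioi, max_eq_right ht,
    ← integral_muDensity hα,
    ← intervalIntegral.integral_Ioi_sub_Ioi (integrableOn_muDensity hα) ht]
  ring

lemma muAlpha_Iio_zero {α : ℝ} : muAlpha α (Set.Iio 0) = 0 := by
  rw [muAlpha, Measure.smul_apply, muKernel, withDensity_apply _ measurableSet_Iio,
    setLIntegral_congr_fun (g := fun _ => 0) measurableSet_Iio
      (fun x hx => if_neg (not_le.2 hx))]
  simp

/-- The scale in which `muAlpha α` is comparable to the exponential law. -/
def muScale (α b x : ℝ) : ℝ := (b + max x 0) ^ α / 2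

lemma continuous_muScale {α b : ℝ} (hα : 0 < α) : Continuous (muScale α b) :=
  ((Real.continuous_rpow_const hα.le).comp
    (continuous_const.add (continuous_id.max continuous_const))).div_const 2

lemma one_sub_integral_muDensity_le {α b : ℝ} (hα : 0 < α) (hα1 : α < 1) (hb : 0 < b)
    (hbα : 2 * (1 - α) / α ≤ b ^ α) {x : ℝ} (hx : 0 ≤ x) :
    1 - ∫ t in (0 : ℝ)..x, muDensity α t ≤ 2 / α * (b + x) ^ (1 - α) * muDensity α x := by
  set p := muDensity α with hp
  set H : ℝ → ℝ := fun t => 2 / α * (b + t) ^ (1 - α) * p t + ∫ s in (0 : ℝ)..t, p s with hH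
  have hpc : Continuous p := continuous_muDensity hα
  have hder : ∀ t, 0 < t → HasDerivAt H
      ((2 / α * ((1 - α) * (b + t) ^ (-α))) * p t +
        2 / α * (b + t) ^ (1 - α) * (-(α * t ^ (α - 1)) * p t) + p t) t := by
    intro t ht
    have h1 : HasDerivAt (fun t => (b + t) ^ (1 - α)) ((1 - α) * (b + t) ^ (-α)) t := by
      have := ((hasDerivAt_id t).const_add b).rpow_const (p := 1 - α) (Or.inl (by simp; linarith))
      convert! this using 1
      simp only [id_eq, one_mul]
      congr 2
      ring
    have h2 : HasDerivAt p (-(α * t ^ (α - 1)) * p t) t := by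
      have := ((Real.hasDerivAt_rpow_const (p := α) (Or.inl ht.ne')).neg.exp).div_const
        (∫ t in Set.Ioi (0 : ℝ), Real.exp (-t ^ α))
      convert! this using 1
      simp only [hp, muDensity, Pi.neg_apply]
      ring
    exact ((h1.const_mul (2 / α)).mul h2).add (hpc.integral_hasStrictDerivAt 0 t).hasDerivAt
  have hcont : ContinuousOn H (Set.Ici 0) := by
    refine ContinuousOn.add (ContinuousOn.mul (continuousOn_const.mul ?_) hpc.continuousOn) ?_
    · refine ContinuousOn.rpow_const (by fun_prop) fun t ht => Or.inl ?_
      have : 0 ≤ t := ht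
      linarith
    · exact (intervalIntegral.continuous_primitive
        (fun a c => hpc.intervalIntegrable a c) 0).continuousOn
  have hanti : AntitoneOn H (Set.Ici 0) := by
    refine antitoneOn_of_deriv_nonpos (convex_Ici 0) hcont ?_ ?_
    · intro t ht
      rw [interior_Ici] at ht
      exact (hder t ht).differentiableAt.differentiableWithinAt
    · intro t ht
      rw [interior_Ici] at ht
      have ht0 : 0 < t := ht
      rw [(hder t ht).deriv]
      have hpt : 0 < p t := muDensity_pos hα t
      have hbt : 0 < b + t := by linarith
      have h1 : 2 / α * (1 - α) * (b + t) ^ (-α) ≤ 1 := by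
        rw [Real.rpow_neg hbt.le, ← div_eq_mul_inv, div_le_one (Real.rpow_pos_of_pos hbt α)]
        calc 2 / α * (1 - α) = 2 * (1 - α) / α := by ring
          _ ≤ b ^ α := hbα
          _ ≤ (b + t) ^ α := Real.rpow_le_rpow hb.le (by linarith) hα.le
      have h2 : 1 ≤ (b + t) ^ (1 - α) * t ^ (α - 1) := by
        rw [show α - 1 = -(1 - α) by ring, Real.rpow_neg ht0.le, ← div_eq_mul_inv,
          one_le_div (Real.rpow_pos_of_pos ht0 _)]
        exact Real.rpow_le_rpow ht0.le (by linarith) (by linarith)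
      have h3 : (2 / α * ((1 - α) * (b + t) ^ (-α))) * p t +
          2 / α * (b + t) ^ (1 - α) * (-(α * t ^ (α - 1)) * p t) + p t =
          (2 / α * (1 - α) * (b + t) ^ (-α) - 2 * ((b + t) ^ (1 - α) * t ^ (α - 1)) + 1) * p t := by
        field_simp
        ring
      rw [h3]
      exact mul_nonpos_of_nonpos_of_nonneg (by linarith) hpt.le
  have hle : (1 : ℝ) ≤ H x := by
    rw [← integral_muDensity hα]
    refine le_of_tendsto
      (intervalIntegral_tendsto_integral_Ioi 0 (integrableOn_muDensity hα) tendsto_id) ?_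
    filter_upwards [eventually_ge_atTop x] with R hR
    have hR0 : 0 ≤ R := hx.trans hR
    refine le_trans ?_ (hanti hx hR0 hR)
    have : 0 ≤ 2 / α * (b + R) ^ (1 - α) * p R :=
      mul_nonneg (mul_nonneg (by positivity) (Real.rpow_nonneg (by linarith) _))
        (muDensity_pos hα R).le
    simp only [hH, id]
    linarith
  simp only [hH] at hle
  linarith

lemma monotoneOn_cumHazard_sub_muScale {α b : ℝ} (hα : 0 < α) (hα1 : α < 1) (hb : 0 < b)
    (hbα : 2 * (1 - α) / α ≤ b ^ α) :
    MonotoneOn (fun x => cumHazard (muDensity α) x - muScale α b x) (Set.Ici 0) := by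
  have hS := hasDerivAt_cumHazard (continuous_muDensity hα) (muDensity_pos hα)
    (integrableOn_muDensity hα) (integral_muDensity hα)
  have hU : ∀ x, 0 < x → HasDerivAt (muScale α b) (α * (b + x) ^ (α - 1) / 2) x := by
    intro x hx
    have h1 := (((hasDerivAt_id x).const_add b).rpow_const (p := α)
      (Or.inl (by simp; linarith))).div_const 2
    refine HasDerivAt.congr_of_eventuallyEq (f := fun x => (b + x) ^ α / 2) ?_ ?_
    · convert! h1 using 1
      simp
    · filter_upwards [lt_mem_nhds hx] with y hy
      rw [muScale, max_eq_left hy.le]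
  refine monotoneOn_of_deriv_nonneg (convex_Ici 0) ?_ ?_ ?_
  · exact fun x _ => ((hS x).continuousAt.sub
      (continuous_muScale hα).continuousAt).continuousWithinAt
  · intro x hx
    rw [interior_Ici] at hx
    exact ((hS x).sub (hU x hx)).differentiableAt.differentiableWithinAt
  · intro x hx
    rw [interior_Ici] at hx
    have hx0 : 0 < x := hx
    rw [((hS x).fun_sub (hU x hx)).deriv, sub_nonneg]
    have hlt := integral_lt_integral_Ioi (continuous_muDensity hα) (muDensity_pos hα)
      (integrableOn_muDensity hα) x
    rw [integral_muDensity hα] at hlt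
    have hbx : 0 < b + x := by linarith
    have hle := one_sub_integral_muDensity_le hα hα1 hb hbα hx0.le
    rw [cumHazard, Real.exp_neg, Real.exp_log (by linarith), ← div_eq_mul_inv,
      le_div_iff₀ (by linarith)]
    have hpow : (b + x) ^ (α - 1) * (b + x) ^ (1 - α) = 1 := by
      rw [← Real.rpow_add hbx]
      simp
    calc α * (b + x) ^ (α - 1) / 2 * (1 - ∫ t in (0 : ℝ)..x, muDensity α t)
        ≤ α * (b + x) ^ (α - 1) / 2 * (2 / α * (b + x) ^ (1 - α) * muDensity α x) :=
          mul_le_mul_of_nonneg_left hle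
            (by have := Real.rpow_nonneg hbx.le (α - 1); positivity)
      _ = (b + x) ^ (α - 1) * (b + x) ^ (1 - α) * muDensity α x := by
          field_simp
      _ = muDensity α x := by rw [hpow, one_mul]

lemma muScale_monotone {α b : ℝ} (hα : 0 < α) (hb : 0 < b) : Monotone (muScale α b) := by
  intro x y hxy
  have : 0 ≤ max x 0 := le_max_right _ _
  exact div_le_div_of_nonneg_right (Real.rpow_le_rpow (by linarith)
    (by linarith [max_le_max_right 0 hxy]) hα.le) (by norm_num)

lemma abs_muScale_sub_le {α b : ℝ} (hα : 0 < α) (hα1 : α < 1) (hb : 0 < b)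
    (hbα : 2 * (1 - α) / α ≤ b ^ α) {x y : ℝ} (hx : 0 ≤ x) (hy : 0 ≤ y) :
    |muScale α b x - muScale α b y| ≤
      |cumHazard (muDensity α) x - cumHazard (muDensity α) y| := by
  have hmono := monotoneOn_cumHazard_sub_muScale hα hα1 hb hbα
  wlog hxy : y ≤ x generalizing x y
  · rw [abs_sub_comm, abs_sub_comm (cumHazard _ x)]
    exact this hy hx (le_of_not_ge hxy)
  have h1 := hmono hy hx hxy
  have h2 := muScale_monotone hα hb hxy
  simp only at h1
  rw [abs_of_nonneg (by linarith), abs_of_nonneg (by linarith)]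
  linarith

theorem integral_muAlpha_mul_integral_muAlpha_le_one {α b : ℝ} (hα : 0 < α) (hα1 : α < 1)
    (hb : 0 < b) (hbα : 2 * (1 - α) / α ≤ b ^ α) (f g : ℝ → ℝ) (hf : Continuous f)
    (hg : Continuous g) (hf0 : ∀ x, 0 < f x) (hg0 : ∀ x, 0 < g x) (hfM : ∃ M, ∀ x, f x ≤ M)
    (hgM : ∃ M, ∀ x, g x ≤ M)
    (hfg : ∀ x y, f x * g y ≤ Real.exp (tauCost (muScale α b x - muScale α b y))) :
    (∫ x, f x ∂(muAlpha α)) * (∫ x, g x ∂(muAlpha α)) ≤ 1 := by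
  have hint : ∀ φ : ℝ → ℝ, Continuous φ → (∀ x, 0 < φ x) → (∃ M, ∀ x, φ x ≤ M) →
      IntegrableOn (fun t => φ t * muDensity α t) (Set.Ioi 0) := by
    intro φ hφ hφ0 ⟨M, hM⟩
    refine (integrableOn_muDensity hα).bdd_mul (c := M) hφ.measurable.aestronglyMeasurable
      (ae_of_all _ fun x => ?_)
    rw [Real.norm_eq_abs, abs_of_pos (hφ0 x)]
    exact hM x
  rw [integral_muAlpha hα, integral_muAlpha hα]
  refine integral_mul_integral_le_one_of_cumHazard (continuous_muDensity hα) (muDensity_pos hα)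
    (integrableOn_muDensity hα) (integral_muDensity hα) hf hf0 (hint f hf hf0 hfM) hg hg0
    (hint g hg hg0 hgM) fun x y hx hy => (hfg x y).trans ?_
  exact Real.exp_le_exp.2 (tauCost_le_tauCost (abs_muScale_sub_le hα hα1 hb hbα hx hy))

lemma muAlpha_real_Ioi_le {α b : ℝ} (hα : 0 < α) (hα1 : α < 1) (hb : 0 < b)
    (hbα : 2 * (1 - α) / α ≤ b ^ α) {t : ℝ} (ht : 0 ≤ t) :
    (muAlpha α).real (Set.Ioi t) ≤ Real.exp (-(muScale α b t - muScale α b 0)) := by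
  have h := monotoneOn_cumHazard_sub_muScale hα hα1 hb hbα (Set.mem_Ici.2 le_rfl) ht ht
  have hlt := integral_lt_integral_Ioi (continuous_muDensity hα) (muDensity_pos hα)
    (integrableOn_muDensity hα) t
  rw [integral_muDensity hα] at hlt
  rw [muAlpha_real_Ioi hα ht, ← Real.exp_log (sub_pos.2 hlt), Real.exp_le_exp]
  simp only [cumHazard, intervalIntegral.integral_same, sub_zero, Real.log_one, neg_zero] at h
  linarith

/-! ### From the cost to the balls -/

lemma abs_rpow_sub_rpow_le {β a c : ℝ} (hβ : 1 ≤ β) (ha : 0 < a) (hc : 0 < c) :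
    |c ^ β - a ^ β| ≤ β * (a + |c - a|) ^ (β - 1) * |c - a| := by
  have key : ∀ s t : ℝ, 0 < s → s ≤ t → t ^ β - s ^ β ≤ β * t ^ (β - 1) * (t - s) := by
    intro s t hs hst
    have ht : 0 < t := hs.trans_le hst
    have h := one_add_mul_self_le_rpow_one_add (s := s / t - 1) (p := β)
      (by have := div_pos hs ht; linarith) hβ
    rw [add_sub_cancel, Real.div_rpow hs.le ht.le, le_div_iff₀ (Real.rpow_pos_of_pos ht β)] at h
    have htp : t ^ β = t ^ (β - 1) * t := by
      rw [← Real.rpow_add_one ht.ne', sub_add_cancel]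
    have : (1 + β * (s / t - 1)) * t ^ β = t ^ β - β * t ^ (β - 1) * (t - s) := by
      rw [htp]
      field_simp
      ring
    linarith
  have hmono : ∀ t, 0 ≤ t → t ≤ a + |c - a| →
      β * t ^ (β - 1) * |c - a| ≤ β * (a + |c - a|) ^ (β - 1) * |c - a| := fun t ht h =>
    mul_le_mul_of_nonneg_right (mul_le_mul_of_nonneg_left
      (Real.rpow_le_rpow ht h (by linarith)) (by linarith)) (abs_nonneg _)
  rcases le_total a c with h | h
  · rw [abs_of_nonneg (sub_nonneg.2 (Real.rpow_le_rpow ha.le h (by linarith)))]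
    refine le_trans ?_ (hmono c hc.le (by linarith [le_abs_self (c - a)]))
    rw [abs_of_nonneg (sub_nonneg.2 h)]
    exact key a c ha h
  · rw [abs_sub_comm (c ^ β), abs_of_nonneg (sub_nonneg.2 (Real.rpow_le_rpow hc.le h (by linarith)))]
    refine le_trans ?_ (hmono a ha.le (by linarith [abs_nonneg (c - a)]))
    rw [abs_sub_comm, abs_of_nonneg (sub_nonneg.2 h)]
    exact key c a hc h

lemma abs_sub_le_of_muScale {α b u x y : ℝ} (hα : 0 < α) (hα1 : α < 1) (hb : 0 < b)
    (hx : 0 ≤ x) (hy : 0 ≤ y) (hyu : (b + y) ^ α ≤ u) :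
    |x - y| ≤ 2 * (1 / α) * 3 ^ (1 / α - 1) *
      (u ^ (1 / α - 1) * |muScale α b x - muScale α b y| +
        |muScale α b x - muScale α b y| ^ (1 / α)) := by
  set β := 1 / α with hβ
  have hβ1 : 1 ≤ β := by rw [hβ, le_div_iff₀ hα]; linarith
  have hbx : 0 < b + x := by linarith
  have hby : 0 < b + y := by linarith
  have hax : 0 < (b + x) ^ α := Real.rpow_pos_of_pos hbx α
  have hay : 0 < (b + y) ^ α := Real.rpow_pos_of_pos hby α
  have hinv : ∀ t : ℝ, 0 < t → (t ^ α) ^ β = t := fun t ht => by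
    rw [← Real.rpow_mul ht.le, hβ, mul_one_div_cancel hα.ne', Real.rpow_one]
  have h1 := abs_rpow_sub_rpow_le hβ1 hay hax
  rw [hinv _ hbx, hinv _ hby, add_sub_add_left_eq_sub] at h1
  set h := |muScale α b x - muScale α b y| with hh
  have hΔ : |(b + x) ^ α - (b + y) ^ α| = 2 * h := by
    rw [hh, muScale, muScale, max_eq_left hx, max_eq_left hy, ← sub_div, abs_div,
      abs_of_pos (by norm_num : (0 : ℝ) < 2)]
    ring
  rw [hΔ] at h1
  have hh0 : 0 ≤ h := abs_nonneg _
  have hu0 : 0 < u := hay.trans_le hyu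
  have hpow : ((b + y) ^ α + 2 * h) ^ (β - 1) ≤
      3 ^ (β - 1) * (u ^ (β - 1) + h ^ (β - 1)) := by
    have hmax : (max u h) ^ (β - 1) ≤ u ^ (β - 1) + h ^ (β - 1) := by
      rcases le_total u h with hc | hc
      · rw [max_eq_right hc]
        linarith [Real.rpow_nonneg hu0.le (β - 1)]
      · rw [max_eq_left hc]
        linarith [Real.rpow_nonneg hh0 (β - 1)]
    calc ((b + y) ^ α + 2 * h) ^ (β - 1) ≤ (3 * max u h) ^ (β - 1) :=
          Real.rpow_le_rpow (by linarith)
            (by linarith [le_max_left u h, le_max_right u h]) (by linarith)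
      _ = 3 ^ (β - 1) * (max u h) ^ (β - 1) :=
          Real.mul_rpow (by norm_num) (hu0.le.trans (le_max_left _ _))
      _ ≤ _ := mul_le_mul_of_nonneg_left hmax (Real.rpow_nonneg (by norm_num) _)
  have hhβ : h ^ (β - 1) * h = h ^ β := by
    rw [← Real.rpow_add_one' hh0 (by linarith), sub_add_cancel]
  calc |x - y| ≤ β * ((b + y) ^ α + 2 * h) ^ (β - 1) * (2 * h) := h1
    _ ≤ β * (3 ^ (β - 1) * (u ^ (β - 1) + h ^ (β - 1))) * (2 * h) :=
        mul_le_mul_of_nonneg_right (mul_le_mul_of_nonneg_left hpow (by linarith)) (by linarith)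
    _ = 2 * β * 3 ^ (β - 1) * (u ^ (β - 1) * h + h ^ (β - 1) * h) := by ring
    _ = _ := by rw [hhβ]

lemma exists_add_eq_of_abs_le_add {d p q : ℝ} (hp : 0 ≤ p) (hq : 0 ≤ q) (h : |d| ≤ p + q) :
    ∃ d₁ d₂, d = d₁ + d₂ ∧ |d₁| ≤ p ∧ |d₂| ≤ q := by
  obtain ⟨h1, h2⟩ := abs_le.1 h
  rcases le_total d (-p) with hc | hc
  · exact ⟨-p, d + p, by ring, by rw [abs_neg, abs_of_nonneg hp], abs_le.2 ⟨by linarith, by linarith⟩⟩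
  rcases le_total d p with hc' | hc'
  · exact ⟨d, 0, by ring, abs_le.2 ⟨hc, hc'⟩, by simpa using hq⟩
  · exact ⟨p, d - p, by ring, by rw [abs_of_nonneg hp], abs_le.2 ⟨by linarith, by linarith⟩⟩

lemma mem_smul_lpBall {p s : ℝ} (hp : 0 < p) (hs : 0 < s) {n : ℕ} {v : Fin n → ℝ}
    (h : ∑ i, |v i| ^ p ≤ s ^ p) : v ∈ s • lpBall p n := by
  refine Set.mem_smul_set.2 ⟨s⁻¹ • v, ?_, smul_inv_smul₀ hs.ne' v⟩
  have hsum : ∑ i, |(s⁻¹ • v) i| ^ p ≤ 1 := by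
    have : ∀ i, |(s⁻¹ • v) i| ^ p = |v i| ^ p / s ^ p := fun i => by
      rw [Pi.smul_apply, smul_eq_mul, abs_mul, abs_of_pos (inv_pos.2 hs), ← Real.div_rpow
        (abs_nonneg _) hs.le, inv_mul_eq_div]
    simp only [this]
    rw [← Finset.sum_div]
    exact div_le_one_of_le₀ h (Real.rpow_nonneg hs.le p)
  exact Real.rpow_le_one (Finset.sum_nonneg fun i _ => Real.rpow_nonneg (abs_nonneg _) p) hsum
    (by positivity)

lemma mem_add_lpBall_of_tauCost {α K Λ r : ℝ} (hα : 0 < α) (hα1 : α < 1) (hK : 1 ≤ K)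
    (hΛ : 0 < Λ) (hr : 0 < r) {n : ℕ} {d h : Fin n → ℝ}
    (hsmall : ∀ i, |h i| ≤ 1 → |d i| ≤ K * Λ * |h i|)
    (hbig : ∀ i, 1 ≤ |h i| → |d i| ≤ K * Λ * |h i| + K * |h i| ^ (1 / α))
    (hcost : ∑ i, tauCost (h i) ≤ r / (24 * K ^ 2)) :
    d ∈ Λ • (Real.sqrt r • lpBall 2 n + r • lpBall 1 n) + r ^ (1 / α) • lpBall α n := by
  have hK0 : 0 < K := by linarith
  have hsplit : ∀ i, ∃ d₀ d₁ d₂ : ℝ, d i = Λ * d₀ + Λ * d₁ + d₂ ∧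
      |d₀| ^ (2 : ℝ) ≤ 24 * K ^ 2 * tauCost (h i) ∧ |d₁| ≤ 24 * K ^ 2 * tauCost (h i) ∧
      |d₂| ^ α ≤ 24 * K ^ 2 * tauCost (h i) := by
    intro i
    have hT : 0 ≤ 24 * K ^ 2 * tauCost (h i) := mul_nonneg (by positivity) (tauCost_nonneg _)
    rcases le_total |h i| 1 with hi | hi
    · refine ⟨d i / Λ, 0, 0, by field_simp; ring, ?_, by simpa using hT,
        by simpa [Real.zero_rpow hα.ne'] using hT⟩
      have h1 : |d i / Λ| ≤ K * |h i| := by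
        rw [abs_div, abs_of_pos hΛ, div_le_iff₀ hΛ]
        linarith [hsmall i hi]
      rw [Real.rpow_two]
      calc |d i / Λ| ^ 2 ≤ (K * |h i|) ^ 2 := pow_le_pow_left₀ (abs_nonneg _) h1 2
        _ = K ^ 2 * h i ^ 2 := by rw [mul_pow, sq_abs]
        _ ≤ K ^ 2 * (24 * tauCost (h i)) :=
            mul_le_mul_of_nonneg_left (sq_le_mul_tauCost hi) (sq_nonneg K)
        _ = _ := by ring
    · obtain ⟨e₁, e₂, he, he₁, he₂⟩ := exists_add_eq_of_abs_le_add
        (mul_nonneg (mul_pos hK0 hΛ).le (abs_nonneg (h i)))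
        (mul_nonneg hK0.le (Real.rpow_nonneg (abs_nonneg (h i)) _)) (hbig i hi)
      have hKT : K * |h i| ≤ 24 * K ^ 2 * tauCost (h i) := by
        calc K * |h i| ≤ K ^ 2 * |h i| :=
              mul_le_mul_of_nonneg_right (by nlinarith) (abs_nonneg _)
          _ ≤ K ^ 2 * (24 * tauCost (h i)) :=
              mul_le_mul_of_nonneg_left (abs_le_mul_tauCost hi) (sq_nonneg K)
          _ = _ := by ring
      refine ⟨0, e₁ / Λ, e₂, by rw [he]; field_simp; ring, ?_, ?_, ?_⟩
      · simpa using hT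
      · rw [abs_div, abs_of_pos hΛ, div_le_iff₀ hΛ]
        exact he₁.trans (by nlinarith)
      · calc |e₂| ^ α ≤ (K * |h i| ^ (1 / α)) ^ α :=
              Real.rpow_le_rpow (abs_nonneg _) he₂ hα.le
          _ = K ^ α * |h i| := by
              rw [Real.mul_rpow hK0.le (Real.rpow_nonneg (abs_nonneg _) _),
                ← Real.rpow_mul (abs_nonneg _), one_div_mul_cancel hα.ne', Real.rpow_one]
          _ ≤ K * |h i| := mul_le_mul_of_nonneg_right
              (Real.rpow_le_self_of_one_le hK hα1.le) (abs_nonneg _)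
          _ ≤ _ := hKT
  have hsum : ∑ i, 24 * K ^ 2 * tauCost (h i) ≤ r := by
    rw [← Finset.mul_sum, mul_comm]
    exact (le_div_iff₀ (by positivity)).1 hcost
  choose d₀ d₁ d₂ hd h₀ h₁ h₂ using hsplit
  have hdec : d = Λ • (d₀ + d₁) + d₂ := by
    ext i
    simp only [Pi.add_apply, Pi.smul_apply, smul_eq_mul, hd i]
    ring
  rw [hdec]
  refine Set.add_mem_add (Set.smul_mem_smul_set (Set.add_mem_add ?_ ?_)) ?_
  · refine mem_smul_lpBall two_pos (Real.sqrt_pos.2 hr) ?_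
    rw [Real.rpow_two, Real.sq_sqrt hr.le]
    exact (Finset.sum_le_sum fun i _ => h₀ i).trans hsum
  · refine mem_smul_lpBall one_pos hr ?_
    simp only [Real.rpow_one]
    exact (Finset.sum_le_sum fun i _ => h₁ i).trans hsum
  · refine mem_smul_lpBall hα (Real.rpow_pos_of_pos hr _) ?_
    rw [← Real.rpow_mul hr.le, one_div_mul_cancel hα.ne', Real.rpow_one]
    exact (Finset.sum_le_sum fun i _ => h₂ i).trans hsum

lemma add_log_rpow_le {B γ C : ℝ} (hB : 1 ≤ B) (hγ : 0 < γ) (hC : 1 ≤ C) {n : ℕ} (hn : 2 ≤ n) :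
    (B + 2 * Real.log (n * C)) ^ γ ≤
      ((2 * B + 4) * (1 + γ)) ^ γ * (C * Real.log n ^ γ) := by
  have hn2 : (2 : ℝ) ≤ n := by exact_mod_cast hn
  have hlog : 1 / 2 ≤ Real.log n := by
    have h1 := Real.log_two_gt_d9
    have h2 := Real.log_le_log two_pos hn2
    linarith
  have hlC : 0 ≤ Real.log C := Real.log_nonneg hC
  have hC0 : 0 ≤ C := by linarith
  have hCγ : 1 + Real.log C ≤ (1 + γ) * C ^ (1 / γ) := by
    have h1 := Real.log_le_rpow_div hC0 (one_div_pos.2 hγ)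
    rw [div_div_eq_mul_div, div_one] at h1
    have h2 := Real.one_le_rpow hC (one_div_pos.2 hγ).le
    linarith
  have hle : B + 2 * Real.log (n * C) ≤ (2 * B + 4) * (1 + γ) * (C ^ (1 / γ) * Real.log n) := by
    rw [Real.log_mul (by linarith) (by linarith)]
    calc B + 2 * (Real.log n + Real.log C) ≤ (2 * B + 4) * ((1 + Real.log C) * Real.log n) := by
          nlinarith [mul_nonneg hlC (by linarith : 0 ≤ Real.log n - 1 / 2),
            mul_nonneg (by linarith : 0 ≤ B) (by linarith : 0 ≤ Real.log n - 1 / 2),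
            mul_nonneg (by linarith : 0 ≤ B) (mul_nonneg hlC (by linarith : 0 ≤ Real.log n))]
      _ ≤ (2 * B + 4) * ((1 + γ) * C ^ (1 / γ) * Real.log n) :=
          mul_le_mul_of_nonneg_left (mul_le_mul_of_nonneg_right hCγ (by linarith)) (by linarith)
      _ = _ := by ring
  have h0 : 0 ≤ B + 2 * Real.log (n * C) := by
    have := Real.log_nonneg (by nlinarith : 1 ≤ (n : ℝ) * C)
    linarith
  calc (B + 2 * Real.log (n * C)) ^ γ
      ≤ ((2 * B + 4) * (1 + γ) * (C ^ (1 / γ) * Real.log n)) ^ γ :=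
        Real.rpow_le_rpow h0 hle hγ.le
    _ = ((2 * B + 4) * (1 + γ)) ^ γ * (C * Real.log n ^ γ) := by
        rw [Real.mul_rpow (mul_nonneg (by linarith) (by linarith))
          (mul_nonneg (Real.rpow_nonneg hC0 _) (by linarith)),
          Real.mul_rpow (Real.rpow_nonneg hC0 _) (by linarith), ← Real.rpow_mul hC0,
          one_div_mul_cancel hγ.ne', Real.rpow_one]

/-! ### The product measure -/

lemma pi_real_coord {μ : Measure ℝ} [IsProbabilityMeasure μ] {n : ℕ} (i : Fin n) {s : Set ℝ}
    (hs : MeasurableSet s) :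
    (Measure.pi fun _ : Fin n => μ).real {x | x i ∈ s} = μ.real s :=
  (measurePreserving_eval (fun _ : Fin n => μ) i).measureReal_preimage hs.nullMeasurableSet

lemma pi_real_sub_le {μ : Measure ℝ} [IsProbabilityMeasure μ] {n : ℕ} (A : Set (Fin n → ℝ))
    (t : ℝ) :
    (Measure.pi fun _ => μ).real A - n * μ.real (Set.Ioi t) ≤
      (Measure.pi fun _ => μ).real (A ∩ {x | ∀ i, x i ≤ t}) := by
  have hsub : A ⊆ (A ∩ {x | ∀ i, x i ≤ t}) ∪ ⋃ i ∈ Finset.univ, {x | x i ∈ Set.Ioi t} := by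
    intro x hx
    by_cases h : ∀ i, x i ≤ t
    · exact Or.inl ⟨hx, h⟩
    · push Not at h
      obtain ⟨i, hi⟩ := h
      exact Or.inr (Set.mem_biUnion (Finset.mem_univ i) hi)
  have h1 := (measureReal_mono (μ := Measure.pi fun _ : Fin n => μ) hsub).trans
    (measureReal_union_le _ _)
  have h2 := measureReal_biUnion_finset_le (μ := Measure.pi fun _ : Fin n => μ) Finset.univ
    fun i : Fin n => {x : Fin n → ℝ | x i ∈ Set.Ioi t}
  simp only [pi_real_coord _ (measurableSet_Ioi (a := t)), Finset.sum_const, Finset.card_univ,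
    Fintype.card_fin, nsmul_eq_mul] at h2
  linarith

lemma muPi_exists_neg {α : ℝ} (hα : 0 < α) (n : ℕ) : muPi α n {x | ∃ i, x i < 0} = 0 := by
  have := isProbabilityMeasure_muAlpha hα
  rw [Set.ofPred_exists, measure_iUnion_null_iff]
  intro i
  exact ((measurePreserving_eval (fun _ : Fin n => muAlpha α) i).measure_preimage
    measurableSet_Iio.nullMeasurableSet).trans muAlpha_Iio_zero

/-- Proposition (two-level deviation inequality for `μ_α^n`, `α ∈ (0,1)`). -/
theorem deviation_inequality_muAlpha (α : ℝ) (hα0 : 0 < α) (hα1 : α < 1) :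
    ∃ c > (0 : ℝ), ∀ n : ℕ, 2 ≤ n → ∀ r > (0 : ℝ), ∀ A : Set (Fin n → ℝ),
      MeasurableSet A → (∀ x ∈ A, ∀ i, 0 ≤ x i) → ∀ C > (0 : ℝ),
        1 / C < (muPi α n A).toReal →
        (muPi α n
          (A + (C * Real.log n ^ (1/α - 1)) •
              (Real.sqrt r • lpBall 2 n + r • lpBall 1 n) +
            r ^ (1/α) • lpBall α n)ᶜ).toReal ≤
          Real.exp (-c * r) / ((muPi α n A).toReal - 1 / C) := by
  have := isProbabilityMeasure_muAlpha hα0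
  have hβ1 : 1 < 1 / α := by rw [lt_div_iff₀ hα0]; linarith
  have hγ : 0 < 1 / α - 1 := by linarith
  obtain ⟨b, hb, hbα, hB⟩ : ∃ b : ℝ, 0 < b ∧ 2 * (1 - α) / α ≤ b ^ α ∧ 1 ≤ b ^ α := by
    have h0 : (0 : ℝ) < max 1 (2 * (1 - α) / α) := lt_max_of_lt_left one_pos
    refine ⟨(max 1 (2 * (1 - α) / α)) ^ (1 / α), Real.rpow_pos_of_pos h0 _, ?_⟩
    rw [← Real.rpow_mul h0.le, one_div_mul_cancel hα0.ne', Real.rpow_one]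
    exact ⟨le_max_right _ _, le_max_left _ _⟩
  set K₀ : ℝ := 2 * (1 / α) * 3 ^ (1 / α - 1) with hK₀
  set K₁ : ℝ := ((2 * b ^ α + 4) * (1 + (1 / α - 1))) ^ (1 / α - 1) with hK₁
  have hK₀1 : 1 ≤ K₀ := by
    have := Real.one_le_rpow (by norm_num : (1 : ℝ) ≤ 3) hγ.le
    nlinarith
  have hK₁1 : 1 ≤ K₁ := Real.one_le_rpow (by nlinarith) hγ.le
  set K : ℝ := 2 * K₀ * K₁ with hK
  have hK1 : 1 ≤ K := by nlinarith
  refine ⟨1 / (24 * K ^ 2), by positivity, ?_⟩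
  intro n hn r hr A _ hA0 C hC hCA
  set ν := muPi α n with hν
  have : IsProbabilityMeasure ν := by rw [hν, muPi]; infer_instance
  change 1 / C < ν.real A at hCA
  have hC1 : 1 ≤ C := by
    have : 1 / C < 1 := hCA.trans_le measureReal_le_one
    rw [div_lt_one hC] at this
    exact this.le
  have hn2 : (2 : ℝ) ≤ n := by exact_mod_cast hn
  have hnC : 1 ≤ n * C := by nlinarith
  have hlogn : 0 < Real.log n := Real.log_pos (by linarith)
  set Λ := C * Real.log n ^ (1 / α - 1) with hΛ
  have hΛ0 : 0 < Λ := mul_pos hC (Real.rpow_pos_of_pos hlogn _)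
  set u := b ^ α + 2 * Real.log (n * C) with hu
  have hlognC : 0 ≤ Real.log (n * C) := Real.log_nonneg hnC
  have hu1 : 1 ≤ u := by linarith
  have huΛ : u ^ (1 / α - 1) ≤ K₁ * Λ := add_log_rpow_le hB hγ hC1 hn
  set t := u ^ (1 / α) - b with ht
  have hbt : (b + t) ^ α = u := by
    rw [ht, add_sub_cancel, ← Real.rpow_mul (by linarith), one_div_mul_cancel hα0.ne',
      Real.rpow_one]
  have ht0 : 0 ≤ t := by
    have : (b ^ α) ^ (1 / α) ≤ u ^ (1 / α) :=
      Real.rpow_le_rpow (by linarith) (by linarith) (by linarith)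
    rw [← Real.rpow_mul hb.le, mul_one_div_cancel hα0.ne', Real.rpow_one] at this
    linarith
  set A' := A ∩ {x | ∀ i, x i ≤ t} with hA'
  have htail : (muAlpha α).real (Set.Ioi t) ≤ 1 / (n * C) := by
    refine (muAlpha_real_Ioi_le hα0 hα1 hb hbα ht0).trans_eq ?_
    rw [muScale, muScale, max_eq_left ht0, max_self, add_zero, hbt,
      show u / 2 - b ^ α / 2 = Real.log (n * C) by rw [hu]; ring, Real.exp_neg,
      Real.exp_log (by linarith), one_div]
  have hA'le : ν.real A - 1 / C ≤ ν.real A' := by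
    refine le_trans ?_ (pi_real_sub_le (μ := muAlpha α) A t)
    have h1 : (n : ℝ) * (muAlpha α).real (Set.Ioi t) ≤ n * (1 / (n * C)) :=
      mul_le_mul_of_nonneg_left htail (by linarith)
    have h2 : (n : ℝ) * (1 / (n * C)) = 1 / C := by field_simp
    rw [h2] at h1
    exact sub_le_sub_left h1 _
  have hne : A'.Nonempty := by
    rw [Set.nonempty_iff_ne_empty]
    intro he
    rw [he, measureReal_empty] at hA'le
    linarith
  set ρ := r / (24 * K ^ 2) with hρ
  have hρ0 : 0 ≤ ρ := by positivity
  set E := {x : Fin n → ℝ | ∀ k ∈ A', ρ ≤ ∑ i, tauCost (muScale α b (x i) - muScale α b (k i))}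
    with hE
  have hconc : ν.real E * ν.real A' ≤ Real.exp (-ρ) :=
    measureReal_mul_measureReal_le_exp_neg (continuous_muScale hα0)
      (integral_muAlpha_mul_integral_muAlpha_le_one hα0 hα1 hb hbα) hne hρ0
  have hsub : (A + Λ • (Real.sqrt r • lpBall 2 n + r • lpBall 1 n) +
      r ^ (1 / α) • lpBall α n)ᶜ ⊆ E ∪ {x | ∃ i, x i < 0} := by
    intro x hx
    by_contra hcon
    simp only [Set.mem_union, not_or, hE, Set.mem_ofPred_eq, not_exists, not_lt] at hcon
    obtain ⟨hxE, hx0⟩ := hcon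
    push Not at hxE
    obtain ⟨k, hk, hkx⟩ := hxE
    refine hx ?_
    have hbound : ∀ i, |x i - k i| ≤ K₀ * (u ^ (1 / α - 1) *
        |muScale α b (x i) - muScale α b (k i)| +
        |muScale α b (x i) - muScale α b (k i)| ^ (1 / α)) := fun i =>
      abs_sub_le_of_muScale hα0 hα1 hb (hx0 i) (hA0 k hk.1 i) (hbt ▸
        Real.rpow_le_rpow (by linarith [hA0 k hk.1 i]) (by linarith [hk.2 i]) hα0.le)
    have hu1γ : 1 ≤ u ^ (1 / α - 1) := Real.one_le_rpow hu1 hγ.le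
    have hmem : x - k ∈ Λ • (Real.sqrt r • lpBall 2 n + r • lpBall 1 n) +
        r ^ (1 / α) • lpBall α n := by
      refine mem_add_lpBall_of_tauCost
        (h := fun i => muScale α b (x i) - muScale α b (k i)) hα0 hα1 hK1 hΛ0 hr ?_ ?_ hkx.le
      · intro i hi
        have h0 := abs_nonneg (muScale α b (x i) - muScale α b (k i))
        have hp : |muScale α b (x i) - muScale α b (k i)| ^ (1 / α) ≤
            |muScale α b (x i) - muScale α b (k i)| :=
          Real.rpow_le_self_of_le_one h0 hi hβ1.le
        rw [Pi.sub_apply]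
        set s := |muScale α b (x i) - muScale α b (k i)|
        calc |x i - k i| ≤ K₀ * (u ^ (1 / α - 1) * s + s ^ (1 / α)) := hbound i
          _ ≤ K₀ * (u ^ (1 / α - 1) * s + u ^ (1 / α - 1) * s) := by
              refine mul_le_mul_of_nonneg_left (add_le_add_right ?_ _) (by linarith)
              exact hp.trans (le_mul_of_one_le_left h0 hu1γ)
          _ = 2 * K₀ * s * u ^ (1 / α - 1) := by ring
          _ ≤ 2 * K₀ * s * (K₁ * Λ) := mul_le_mul_of_nonneg_left huΛ (by positivity)
          _ = K * Λ * s := by rw [hK]; ring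
      · intro i _
        have h0 := abs_nonneg (muScale α b (x i) - muScale α b (k i))
        rw [Pi.sub_apply]
        set s := |muScale α b (x i) - muScale α b (k i)|
        have hsβ : 0 ≤ s ^ (1 / α) := Real.rpow_nonneg h0 _
        have hKK : K₀ ≤ K := by nlinarith
        have hKK' : K₀ * K₁ ≤ K := by nlinarith
        calc |x i - k i| ≤ K₀ * (u ^ (1 / α - 1) * s + s ^ (1 / α)) := hbound i
          _ = K₀ * s * u ^ (1 / α - 1) + K₀ * s ^ (1 / α) := by ring
          _ ≤ K₀ * s * (K₁ * Λ) + K * s ^ (1 / α) :=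
              add_le_add (mul_le_mul_of_nonneg_left huΛ (by positivity))
                (mul_le_mul_of_nonneg_right hKK hsβ)
          _ = K₀ * K₁ * (Λ * s) + K * s ^ (1 / α) := by ring
          _ ≤ K * (Λ * s) + K * s ^ (1 / α) :=
              add_le_add_left (mul_le_mul_of_nonneg_right hKK' (by positivity)) _
          _ = K * Λ * s + K * s ^ (1 / α) := by ring
    rw [add_assoc]
    have := Set.add_mem_add hk.1 hmem
    rwa [add_sub_cancel] at this
  change ν.real _ ≤ Real.exp (-(1 / (24 * K ^ 2)) * r) / (ν.real A - 1 / C)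
  have hle : ν.real (A + Λ • (Real.sqrt r • lpBall 2 n + r • lpBall 1 n) +
      r ^ (1 / α) • lpBall α n)ᶜ ≤ ν.real E := by
    refine (measureReal_mono hsub).trans ((measureReal_union_le _ _).trans_eq ?_)
    rw [measureReal_def ν {x | ∃ i, x i < 0}, muPi_exists_neg hα0 n, ENNReal.toReal_zero, add_zero]
  rw [le_div_iff₀ (by linarith), show -(1 / (24 * K ^ 2)) * r = -ρ by rw [hρ]; ring]
  exact (mul_le_mul hle hA'le (by linarith) measureReal_nonneg).trans hconc

end
end

section
/- Let p ∈ [1,2] and let A, B be n×n Hermitian (or real symmetric) matrices. Denote by λ_1↓(A) ≥ … ≥ λ_n↓(A) the eigenvalues of A in non-increasing order (similarly for B), and by λ_1(A−B),…,λ_n(A−B) the eigenvalues of A−B. Then Σ_{i=1}^n | λ_i↓(A) − λ_i↓(B) |^p ≤ Σ_{i=1}^n | λ_i(A−B) |^p ≤ ‖A−B‖_{ℓ^p}^p. In particular W_p(μ_A,μ_B) ≤ n^{-1/p} ‖A−B‖_{ℓ^p}, and consequently d(μ_A, μ_B) ≤ n^{-1/p} ‖A−B‖_{ℓ^p}, i.e.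 for every z ∈ 𝒦, | g_{μ_A}(z) − g_{μ_B}(z) | ≤ n^{-1/p} ‖A−B‖_{ℓ^p}. -/
open MeasureTheory Filter Topology

noncomputable section

variable {𝕜 : Type*} [RCLike 𝕜]

/-- The space `H_n^(β)` of self-adjoint `n × n` matrices over `𝕜`. -/
abbrev HermMat (𝕜 : Type*) [RCLike 𝕜] (n : ℕ) := selfAdjoint (Matrix (Fin n) (Fin n) 𝕜)

def hermEntry {n : ℕ} (A : HermMat 𝕜 n) (i j : Fin n) : 𝕜 :=
  (A : Matrix (Fin n) (Fin n) 𝕜) i j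

lemma herm_isHermitian {n : ℕ} (A : HermMat 𝕜 n) :
    (A : Matrix (Fin n) (Fin n) 𝕜).IsHermitian := by
  simpa [Matrix.IsHermitian, ← Matrix.star_eq_conjTranspose] using A.2.star_eq

/-- The eigenvalues of a self-adjoint matrix. -/
def eigs {n : ℕ} (A : HermMat 𝕜 n) : Fin n → ℝ := (herm_isHermitian A).eigenvalues

/-- The non-increasing rearrangement of a tuple of reals. -/
def sortedDesc {n : ℕ} (f : Fin n → ℝ) : Fin n → ℝ :=
  fun i => (f ∘ Tuple.sort f) i.rev

/-- The empirical spectral measure `μ_A = (1/n) ∑ δ_{λ_i}`. -/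
def specMeasure {n : ℕ} (A : HermMat 𝕜 n) : Measure ℝ :=
  ((n : ENNReal))⁻¹ • ∑ i : Fin n, Measure.dirac (eigs A i)

/-- `‖Y‖_{ℓ^p}^p = ∑_{i,j} ‖Y_{i,j}‖^p`. -/
def matLpNormPow (p : ℝ) {n : ℕ} (A : HermMat 𝕜 n) : ℝ :=
  ∑ i, ∑ j, ‖hermEntry A i j‖ ^ p

/-- The Stieltjes transform `g_μ(z) = ∫ dμ(t)/(z - t)`. -/
def stieltjesT (μ : Measure ℝ) (z : ℂ) : ℂ := ∫ t, (z - (t : ℂ))⁻¹ ∂μ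

/-- The quadratic form of a linear map that is diagonal in an orthonormal basis. -/
lemma re_inner_map_self_eq_sum {ι E : Type*} [Fintype ι] [NormedAddCommGroup E]
    [InnerProductSpace 𝕜 E] (T : E →ₗ[𝕜] E) (u : OrthonormalBasis ι 𝕜 E) (d : ι → ℝ)
    (h : ∀ k, T (u k) = (d k : 𝕜) • u k) (x : E) :
    RCLike.re (inner 𝕜 x (T x)) = ∑ k, d k * ‖inner 𝕜 (u k) x‖ ^ 2 := by
  conv_lhs => rw [← u.sum_repr' x, map_sum, u.sum_repr' x]
  simp only [map_smul, h, inner_sum, inner_smul_right, map_sum]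
  refine Finset.sum_congr rfl fun k _ => ?_
  rw [mul_left_comm, ← inner_conj_symm x (u k), RCLike.mul_conj, ← RCLike.ofReal_pow,
    ← RCLike.ofReal_mul, RCLike.ofReal_re]

/-- Weyl's monotonicity principle, with a shift by `t`. -/
lemma eigenvalue_le_eigenvalue_add {n : ℕ} {E : Type*} [NormedAddCommGroup E]
    [InnerProductSpace 𝕜 E] (T S : E →ₗ[𝕜] E) (u v : OrthonormalBasis (Fin n) 𝕜 E)
    {a b : Fin n → ℝ} (ha : Antitone a) (hb : Antitone b)
    (hT : ∀ k, T (u k) = (a k : 𝕜) • u k) (hS : ∀ k, S (v k) = (b k : 𝕜) • v k) (t : ℝ)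
    (h : ∀ x, RCLike.re (inner 𝕜 x (T x)) ≤ RCLike.re (inner 𝕜 x (S x)) + t * ‖x‖ ^ 2)
    (i : Fin n) : a i ≤ b i + t := by
  let F : E →ₗ[𝕜] ({j : Fin n // j ≠ i} → 𝕜) :=
    LinearMap.pi fun j => if i < j.1 then (innerSL 𝕜 (u j)).toLinearMap
      else (innerSL 𝕜 (v j)).toLinearMap
  have := u.toBasis.finiteDimensional_of_finite
  have hF : LinearMap.ker F ≠ ⊥ := F.ker_ne_bot_of_finrank_lt <| by
    rw [Module.finrank_eq_card_basis u.toBasis, Module.finrank_pi]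
    exact Fintype.card_subtype_lt (x := i) (by simp)
  obtain ⟨x, hx, hx0⟩ := (Submodule.ne_bot_iff _).1 hF
  have hFx (j : Fin n) (hj : j ≠ i) : F x ⟨j, hj⟩ = 0 := by
    rw [LinearMap.mem_ker.1 hx]; rfl
  have hu (j : Fin n) (hj : i < j) : inner 𝕜 (u j) x = 0 := by
    simpa [F, hj] using hFx j hj.ne'
  have hv (j : Fin n) (hj : j < i) : inner 𝕜 (v j) x = 0 := by
    simpa [F, hj.not_gt] using hFx j hj.ne
  have hTx : a i * ‖x‖ ^ 2 ≤ RCLike.re (inner 𝕜 x (T x)) := by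
    rw [re_inner_map_self_eq_sum T u a hT, ← u.sum_sq_norm_inner_right x, Finset.mul_sum]
    refine Finset.sum_le_sum fun j _ => ?_
    rcases lt_or_ge i j with hj | hj
    · simp [hu j hj]
    · exact mul_le_mul_of_nonneg_right (ha hj) (by positivity)
  have hSx : RCLike.re (inner 𝕜 x (S x)) ≤ b i * ‖x‖ ^ 2 := by
    rw [re_inner_map_self_eq_sum S v b hS, ← v.sum_sq_norm_inner_right x, Finset.mul_sum]
    refine Finset.sum_le_sum fun j _ => ?_
    rcases lt_or_ge j i with hj | hj
    · simp [hv j hj]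
    · exact mul_le_mul_of_nonneg_right (hb hj) (by positivity)
  have hpos : 0 < ‖x‖ ^ 2 := by positivity
  have := h x
  nlinarith

/-- The permutation that puts a tuple in non-increasing order. -/
def sortDescPerm {n : ℕ} (f : Fin n → ℝ) : Equiv.Perm (Fin n) :=
  Fin.revPerm.trans (Tuple.sort f)

lemma sortedDesc_eq {n : ℕ} (f : Fin n → ℝ) (i : Fin n) :
    sortedDesc f i = f (sortDescPerm f i) := rfl

lemma sortedDesc_antitone {n : ℕ} (f : Fin n → ℝ) : Antitone (sortedDesc f) :=
  fun _ _ hij => Tuple.monotone_sort f (Fin.rev_le_rev.2 hij)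

lemma sum_comp_sortedDesc {n : ℕ} {M : Type*} [AddCommMonoid M] (f : Fin n → ℝ) (g : ℝ → M) :
    ∑ i, g (sortedDesc f i) = ∑ i, g (f i) :=
  Equiv.sum_comp (sortDescPerm f) fun i => g (f i)

/-- The operator on Euclidean space given by a self-adjoint matrix. -/
abbrev hermLin {n : ℕ} (A : HermMat 𝕜 n) :
    EuclideanSpace 𝕜 (Fin n) →ₗ[𝕜] EuclideanSpace 𝕜 (Fin n) :=
  Matrix.toEuclideanLin (A : Matrix (Fin n) (Fin n) 𝕜)

lemma hermLin_eigenvectorBasis {n : ℕ} (A : HermMat 𝕜 n) (k : Fin n) :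
    hermLin A ((herm_isHermitian A).eigenvectorBasis k) =
      (eigs A k : 𝕜) • (herm_isHermitian A).eigenvectorBasis k := by
  apply (WithLp.ofLp_injective 2)
  have h := (herm_isHermitian A).mulVec_eigenvectorBasis k
  rw [RCLike.real_smul_eq_coe_smul (K := 𝕜)] at h
  exact h

lemma sortedDesc_eigs_le_add {n : ℕ} (A B : HermMat 𝕜 n) (t : ℝ)
    (h : ∀ x, RCLike.re (inner 𝕜 x (hermLin A x)) ≤
      RCLike.re (inner 𝕜 x (hermLin B x)) + t * ‖x‖ ^ 2) (i : Fin n) :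
    sortedDesc (eigs A) i ≤ sortedDesc (eigs B) i + t := by
  refine eigenvalue_le_eigenvalue_add (hermLin A) (hermLin B)
    ((herm_isHermitian A).eigenvectorBasis.reindex (sortDescPerm (eigs A)).symm)
    ((herm_isHermitian B).eigenvectorBasis.reindex (sortDescPerm (eigs B)).symm)
    (sortedDesc_antitone _) (sortedDesc_antitone _) (fun k => ?_) (fun k => ?_) t h i
  all_goals
    rw [OrthonormalBasis.reindex_apply, Equiv.symm_symm, sortedDesc_eq]
    exact hermLin_eigenvectorBasis _ _

lemma sum_eigs {n : ℕ} (A : HermMat 𝕜 n) :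
    ∑ i, eigs A i = RCLike.re (A : Matrix (Fin n) (Fin n) 𝕜).trace := by
  simp [(herm_isHermitian A).trace_eq_sum_eigenvalues, eigs]

/-- Applying a real function to the eigenvalues of a self-adjoint matrix. -/
lemma exists_hermMat_map_eigs {n : ℕ} (C : HermMat 𝕜 n) (f : ℝ → ℝ) :
    ∃ P : HermMat 𝕜 n, (∑ i, eigs P i = ∑ i, f (eigs C i)) ∧
      ∀ k, hermLin P ((herm_isHermitian C).eigenvectorBasis k) =
        (f (eigs C k) : 𝕜) • (herm_isHermitian C).eigenvectorBasis k := by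
  have hC := herm_isHermitian C
  let U : Matrix (Fin n) (Fin n) 𝕜 := hC.eigenvectorUnitary
  let D : Matrix (Fin n) (Fin n) 𝕜 := Matrix.diagonal fun i => (f (eigs C i) : 𝕜)
  have hD : IsSelfAdjoint D := by
    simp [D, IsSelfAdjoint, Matrix.star_eq_conjTranspose, Matrix.diagonal_conjTranspose,
      Pi.star_def]
  refine ⟨⟨U * D * star U, hD.conjugate U⟩, ?_, fun k => ?_⟩
  · rw [sum_eigs]
    have hU : star U * U = 1 := Unitary.coe_star_mul_self hC.eigenvectorUnitary
    simp [Matrix.trace_mul_cycle, hU, D, Matrix.trace_diagonal]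
  · apply WithLp.ofLp_injective 2
    have h1 := hC.star_eigenvectorUnitary_mulVec k
    have h2 := hC.eigenvectorUnitary_mulVec k
    simp only [hermLin, Matrix.toLpLin_apply, ← Matrix.mulVec_mulVec, U, h1]
    rw [Matrix.diagonal_mulVec_single, mul_one, ← mul_one (f (eigs C k) : 𝕜), ← smul_eq_mul,
      Pi.single_smul, Matrix.mulVec_smul, h2]
    simp

/-- If `A - B = s C` as quadratic forms, the spectral variation of `A` and `B` is weakly majorized
by the eigenvalues of `s C`. -/
lemma sum_posPart_sortedDesc_sub_le {n : ℕ} (A B C : HermMat 𝕜 n) (s t : ℝ)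
    (hC : ∀ x, RCLike.re (inner 𝕜 x (hermLin A x)) =
      RCLike.re (inner 𝕜 x (hermLin B x)) + s * RCLike.re (inner 𝕜 x (hermLin C x))) :
    ∑ i, max (sortedDesc (eigs A) i - sortedDesc (eigs B) i - t) 0 ≤
      ∑ i, max (s * eigs C i - t) 0 := by
  obtain ⟨P, hP, hPu⟩ := exists_hermMat_map_eigs C fun x => max (s * x - t) 0
  let u := (herm_isHermitian C).eigenvectorBasis
  have hadd (x) : RCLike.re (inner 𝕜 x (hermLin (B + P) x)) =
      RCLike.re (inner 𝕜 x (hermLin B x)) + RCLike.re (inner 𝕜 x (hermLin P x)) := by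
    simp [hermLin, inner_add_right]
  have hPx (x) := re_inner_map_self_eq_sum (hermLin P) u _ hPu x
  have h1 := sortedDesc_eigs_le_add A (B + P) t fun x => by
    have : s * RCLike.re (inner 𝕜 x (hermLin C x)) ≤
        RCLike.re (inner 𝕜 x (hermLin P x)) + t * ‖x‖ ^ 2 := by
      rw [hPx, re_inner_map_self_eq_sum (hermLin C) u _ (hermLin_eigenvectorBasis C) x,
        ← u.sum_sq_norm_inner_right x, Finset.mul_sum, Finset.mul_sum, ← Finset.sum_add_distrib]
      refine Finset.sum_le_sum fun k _ => ?_
      rw [← add_mul, ← mul_assoc]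
      exact mul_le_mul_of_nonneg_right (by linarith [le_max_left (s * eigs C k - t) 0])
        (by positivity)
    linarith [hadd x, hC x]
  have h2 := sortedDesc_eigs_le_add B (B + P) 0 fun x => by
    have : 0 ≤ RCLike.re (inner 𝕜 x (hermLin P x)) := by
      rw [hPx]; exact Finset.sum_nonneg fun k _ => by positivity
    linarith [hadd x]
  calc _ ≤ ∑ i, (sortedDesc (eigs (B + P)) i - sortedDesc (eigs B) i) :=
        Finset.sum_le_sum fun i _ => max_le (by linarith [h1 i]) (by linarith [h2 i])
    _ = ∑ i, eigs P i := by
        rw [Finset.sum_sub_distrib, sum_comp_sortedDesc _ fun x => x,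
          sum_comp_sortedDesc _ fun x => x, sum_eigs, sum_eigs, sum_eigs]
        simp
    _ = _ := hP

lemma intervalIntegrable_rpow_mul_posPart {p : ℝ} (hp : 1 < p) (y a b : ℝ) :
    IntervalIntegrable (fun t : ℝ => t ^ (p - 2) * max (y - t) 0) volume a b :=
  (intervalIntegral.intervalIntegrable_rpow' (by linarith)).mul_continuousOn (by fun_prop)

/-- The representation of `y ^ p` as a superposition of the functions `y ↦ (y - t)₊`. -/
lemma integral_rpow_mul_posPart {p : ℝ} (hp : 1 < p) {y M : ℝ} (hy : 0 ≤ y) (hM : y ≤ M) :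
    ∫ t in (0 : ℝ)..M, t ^ (p - 2) * max (y - t) 0 = y ^ p / (p * (p - 1)) := by
  have hI := intervalIntegrable_rpow_mul_posPart hp y
  have h0 : ∫ t in y..M, t ^ (p - 2) * max (y - t) 0 = 0 := by
    rw [intervalIntegral.integral_congr (g := fun _ => 0), intervalIntegral.integral_zero]
    intro t ht
    rw [Set.uIcc_of_le hM] at ht
    simp [max_eq_right (sub_nonpos.2 ht.1)]
  have h1 : ∫ t in (0 : ℝ)..y, t ^ (p - 2) * max (y - t) 0 =
      ∫ t in (0 : ℝ)..y, (y * t ^ (p - 2) - t ^ (p - 1)) := by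
    refine intervalIntegral.integral_congr fun t ht => ?_
    rw [Set.uIcc_of_le hy] at ht
    have : t ^ (p - 1) = t ^ (p - 2) * t := by
      rw [← Real.rpow_add_one' ht.1 (by linarith)]
      ring_nf
    simp only [max_eq_left (sub_nonneg.2 ht.2), this]
    ring
  have hyp : y ^ p = y ^ (p - 1) * y := by
    rw [← Real.rpow_add_one' hy (by linarith)]
    ring_nf
  rw [← intervalIntegral.integral_add_adjacent_intervals (hI 0 y) (hI y M), h0, h1,
    intervalIntegral.integral_sub
      ((intervalIntegral.intervalIntegrable_rpow' (by linarith)).const_mul y)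
      (intervalIntegral.intervalIntegrable_rpow' (by linarith)),
    intervalIntegral.integral_const_mul, integral_rpow (Or.inl (by linarith)),
    integral_rpow (Or.inl (by linarith)), Real.zero_rpow (by linarith),
    Real.zero_rpow (by linarith), show p - 2 + 1 = p - 1 by ring, show p - 1 + 1 = p by ring, hyp]
  have : p ≠ 0 := by linarith
  have : p - 1 ≠ 0 := by linarith
  field_simp
  ring

lemma max_abs_sub_eq {x t : ℝ} (ht : 0 ≤ t) :
    max (|x| - t) 0 = max (x - t) 0 + max (-x - t) 0 := by
  rcases le_total 0 x with h | h
  · rw [abs_of_nonneg h, max_eq_right (a := -x - t) (by linarith), add_zero]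
  · rw [abs_of_nonpos h, max_eq_right (a := x - t) (by linarith), zero_add]

/-- A Hardy–Littlewood–Pólya inequality for the functions `x ↦ |x| ^ p`. -/
lemma sum_abs_rpow_le_of_sum_posPart_le {ι : Type*} [Fintype ι] {p : ℝ} (hp : 1 ≤ p)
    {a b : ι → ℝ} (h : ∀ t, 0 ≤ t → ∑ i, max (|a i| - t) 0 ≤ ∑ i, max (|b i| - t) 0) :
    ∑ i, |a i| ^ p ≤ ∑ i, |b i| ^ p := by
  rcases hp.eq_or_lt with rfl | hp
  · simpa using h 0 le_rfl
  let M := ∑ i, (|a i| + |b i|)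
  have hM (i : ι) : |a i| + |b i| ≤ M :=
    Finset.single_le_sum (f := fun i => |a i| + |b i|) (fun _ _ => by positivity)
      (Finset.mem_univ i)
  have hM0 : 0 ≤ M := Finset.sum_nonneg fun _ _ => by positivity
  have key (c : ι → ℝ) (hc : ∀ i, |c i| ≤ M) : (∑ i, |c i| ^ p) / (p * (p - 1)) =
      ∫ t in (0 : ℝ)..M, t ^ (p - 2) * ∑ i, max (|c i| - t) 0 := by
    simp_rw [Finset.mul_sum]
    rw [intervalIntegral.integral_finsetSum fun i _ =>
      intervalIntegrable_rpow_mul_posPart hp _ _ _, Finset.sum_div]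
    exact Finset.sum_congr rfl fun i _ =>
      (integral_rpow_mul_posPart hp (abs_nonneg _) (hc i)).symm
  have hint (c : ι → ℝ) : IntervalIntegrable
      (fun t : ℝ => t ^ (p - 2) * ∑ i, max (|c i| - t) 0) volume 0 M :=
    (intervalIntegral.intervalIntegrable_rpow' (by linarith)).mul_continuousOn (by fun_prop)
  have hpp : 0 < p * (p - 1) := mul_pos (by linarith) (by linarith)
  rw [← div_le_div_iff_of_pos_right hpp, key a fun i => by linarith [hM i, abs_nonneg (b i)],
    key b fun i => by linarith [hM i, abs_nonneg (a i)]]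
  exact intervalIntegral.integral_mono_on hM0 (hint a) (hint b) fun t ht =>
    mul_le_mul_of_nonneg_left (h t ht.1) (Real.rpow_nonneg ht.1 _)

/-- The `ℓ^p` version of Lidskii's inequality. -/
lemma sum_abs_sortedDesc_sub_rpow_le {p : ℝ} (hp : 1 ≤ p) {n : ℕ} (A B : HermMat 𝕜 n) :
    ∑ i, |sortedDesc (eigs A) i - sortedDesc (eigs B) i| ^ p ≤ ∑ i, |eigs (A - B) i| ^ p := by
  have hsub (x) : RCLike.re (inner 𝕜 x (hermLin (A - B) x)) =
      RCLike.re (inner 𝕜 x (hermLin A x)) - RCLike.re (inner 𝕜 x (hermLin B x)) := by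
    simp [hermLin, inner_sub_right]
  refine sum_abs_rpow_le_of_sum_posPart_le hp fun t ht => ?_
  simp only [max_abs_sub_eq ht, Finset.sum_add_distrib]
  have h1 := sum_posPart_sortedDesc_sub_le A B (A - B) 1 t fun x => by rw [hsub]; ring
  have h2 := sum_posPart_sortedDesc_sub_le B A (A - B) (-1) t fun x => by rw [hsub]; ring
  simp only [one_mul, neg_one_mul] at h1 h2
  simp only [neg_sub]
  exact add_le_add h1 h2

lemma rpow_sum_le_sum_rpow {ι : Type*} (s : Finset ι) {r : ℝ} (hr : 0 < r) (hr1 : r ≤ 1)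
    {f : ι → ℝ} (hf : ∀ i, 0 ≤ f i) : (∑ i ∈ s, f i) ^ r ≤ ∑ i ∈ s, f i ^ r := by
  classical
  induction s using Finset.induction_on with
  | empty => simp [Real.zero_rpow hr.ne']
  | insert a s ha ih =>
    rw [Finset.sum_insert ha, Finset.sum_insert ha]
    exact (Real.rpow_add_le_add_rpow (hf a) (Finset.sum_nonneg fun i _ => hf i) hr.le hr1).trans
      (by gcongr)

lemma sq_rpow_half {x : ℝ} (hx : 0 ≤ x) (p : ℝ) : (x ^ 2) ^ (p / 2) = x ^ p := by
  rw [← Real.rpow_natCast, ← Real.rpow_mul hx]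
  congr 1
  push_cast
  ring

lemma sum_sq_norm_hermEntry {n : ℕ} (C : HermMat 𝕜 n) (j : Fin n) :
    ∑ i, ‖hermEntry C i j‖ ^ 2 = ∑ k, ‖inner 𝕜 ((herm_isHermitian C).eigenvectorBasis k)
      (EuclideanSpace.single j (1 : 𝕜))‖ ^ 2 * eigs C k ^ 2 := by
  let u := (herm_isHermitian C).eigenvectorBasis
  have hsymm : (hermLin C).IsSymmetric :=
    Matrix.isSymmetric_toEuclideanLin_iff.2 (herm_isHermitian C)
  have h : ∑ i, ‖hermEntry C i j‖ ^ 2 = ‖hermLin C (EuclideanSpace.single j (1 : 𝕜))‖ ^ 2 := by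
    rw [EuclideanSpace.norm_sq_eq]
    simp [hermEntry, hermLin, Matrix.toLpLin_apply]
  rw [h, ← u.sum_sq_norm_inner_right]
  refine Finset.sum_congr rfl fun k _ => ?_
  rw [← hsymm, hermLin_eigenvectorBasis, inner_smul_left, norm_mul, mul_pow, mul_comm]
  simp

/-- For `p ≤ 2` the Schatten `p`-norm is at most the entrywise `ℓ^p` norm. -/
lemma sum_abs_eigs_rpow_le {p : ℝ} (hp0 : 0 < p) (hp2 : p ≤ 2) {n : ℕ} (C : HermMat 𝕜 n) :
    ∑ i, |eigs C i| ^ p ≤ matLpNormPow p C := by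
  let u := (herm_isHermitian C).eigenvectorBasis
  let w (j k : Fin n) : ℝ := ‖inner 𝕜 (u k) (EuclideanSpace.single j (1 : 𝕜))‖ ^ 2
  have hw1 (j : Fin n) : ∑ k, w j k = 1 := by
    simp only [w]
    rw [u.sum_sq_norm_inner_right]
    simp
  have hw2 (k : Fin n) : ∑ j, w j k = 1 := by
    have := (EuclideanSpace.basisFun (Fin n) 𝕜).sum_sq_norm_inner_left (u k)
    simpa [w] using this
  have hjensen (j : Fin n) :
      ∑ k, w j k * |eigs C k| ^ p ≤ (∑ i, ‖hermEntry C i j‖ ^ 2) ^ (p / 2) := by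
    rw [sum_sq_norm_hermEntry]
    have := (Real.concaveOn_rpow (p := p / 2) (by linarith) (by linarith)).le_map_sum
      (t := Finset.univ) (w := w j) (p := fun k => eigs C k ^ 2) (fun k _ => by positivity)
      (hw1 j) (fun k _ => Set.mem_Ici.2 (sq_nonneg _))
    simp only [smul_eq_mul, ← sq_abs (eigs C _)] at this ⊢
    simpa only [sq_rpow_half (abs_nonneg _)] using this
  calc ∑ k, |eigs C k| ^ p = ∑ j, ∑ k, w j k * |eigs C k| ^ p := by
        rw [Finset.sum_comm]
        simp_rw [← Finset.sum_mul, hw2, one_mul]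
    _ ≤ ∑ j, ∑ i, ‖hermEntry C i j‖ ^ p := by
        refine Finset.sum_le_sum fun j _ => (hjensen j).trans ?_
        refine (rpow_sum_le_sum_rpow _ (by linarith) (by linarith)
          fun i => by positivity).trans_eq ?_
        simp only [sq_rpow_half (norm_nonneg _)]
    _ = matLpNormPow p C := Finset.sum_comm

/-- The monotone coupling of two empirical spectral measures. -/
def sortedCoupling {n : ℕ} (A B : HermMat 𝕜 n) : Measure (ℝ × ℝ) :=
  ((n : ENNReal))⁻¹ • ∑ i : Fin n,
    Measure.dirac (sortedDesc (eigs A) i, sortedDesc (eigs B) i)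

lemma sortedCoupling_map_fst {n : ℕ} (A B : HermMat 𝕜 n) :
    (sortedCoupling A B).map Prod.fst = specMeasure A := by
  rw [sortedCoupling, specMeasure, Measure.map_smul, Measure.map_finset_sum (by fun_prop)]
  simp only [Measure.map_dirac' measurable_fst]
  rw [sum_comp_sortedDesc (eigs A) fun x => Measure.dirac x]

lemma sortedCoupling_map_snd {n : ℕ} (A B : HermMat 𝕜 n) :
    (sortedCoupling A B).map Prod.snd = specMeasure B := by
  rw [sortedCoupling, specMeasure, Measure.map_smul, Measure.map_finset_sum (by fun_prop)]
  simp only [Measure.map_dirac' measurable_snd]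
  rw [sum_comp_sortedDesc (eigs B) fun x => Measure.dirac x]

lemma integral_smul_sum_dirac {X F : Type*} [MeasurableSpace X] [MeasurableSingletonClass X]
    [NormedAddCommGroup F] [NormedSpace ℝ F] [CompleteSpace F] {n : ℕ} (x : Fin n → X)
    (f : X → F) :
    ∫ q, f q ∂(((n : ENNReal))⁻¹ • ∑ i, Measure.dirac (x i)) = (n : ℝ)⁻¹ • ∑ i, f (x i) := by
  rw [integral_smul_measure, integral_finsetSum_measure fun i _ => integrable_dirac (by simp)]
  simp

lemma norm_inv_sub_inv_le {z : ℂ} (hz : 2 ≤ z.im) (a b : ℝ) :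
    ‖(z - a)⁻¹ - (z - b)⁻¹‖ ≤ |a - b| := by
  have hlow (c : ℝ) : 1 ≤ ‖z - c‖ := by
    have := Complex.abs_im_le_norm (z - c)
    simp only [Complex.sub_im, Complex.ofReal_im, sub_zero] at this
    linarith [le_abs_self z.im]
  have hne (c : ℝ) : z - c ≠ 0 := norm_pos_iff.1 (by linarith [hlow c])
  rw [inv_sub_inv (hne a) (hne b), norm_div, norm_mul, sub_sub_sub_cancel_left,
    ← Complex.ofReal_sub, Complex.norm_real, Real.norm_eq_abs]
  exact div_le_self (abs_nonneg _) (one_le_mul_of_one_le_of_one_le (hlow a) (hlow b))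

lemma integral_sortedCoupling_rpow_le {p : ℝ} (hp1 : 1 ≤ p) (hp2 : p ≤ 2) {n : ℕ}
    (A B : HermMat 𝕜 n) : (∫ q, |q.1 - q.2| ^ p ∂(sortedCoupling A B)) ^ (1 / p) ≤
      ((n : ℝ) ^ (1 / p))⁻¹ * (matLpNormPow p (A - B)) ^ (1 / p) := by
  rw [sortedCoupling, integral_smul_sum_dirac, smul_eq_mul,
    Real.mul_rpow (by positivity) (Finset.sum_nonneg fun i _ => by positivity),
    Real.inv_rpow (by positivity)]
  gcongr
  exact (sum_abs_sortedDesc_sub_rpow_le hp1 A B).trans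
    (sum_abs_eigs_rpow_le (by linarith) hp2 (A - B))

lemma norm_stieltjesT_sub_le {p : ℝ} (hp1 : 1 ≤ p) {n : ℕ} (A B : HermMat 𝕜 n) {z : ℂ}
    (hz : 2 ≤ z.im) : ‖stieltjesT (specMeasure A) z - stieltjesT (specMeasure B) z‖ ≤
      (∫ q, |q.1 - q.2| ^ p ∂(sortedCoupling A B)) ^ (1 / p) := by
  rw [sortedCoupling, integral_smul_sum_dirac, stieltjesT, stieltjesT, specMeasure, specMeasure,
    integral_smul_sum_dirac, integral_smul_sum_dirac,
    ← sum_comp_sortedDesc (eigs A) fun x => (z - (x : ℂ))⁻¹,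
    ← sum_comp_sortedDesc (eigs B) fun x => (z - (x : ℂ))⁻¹, ← smul_sub,
    ← Finset.sum_sub_distrib, norm_smul, Real.norm_of_nonneg (by positivity)]
  rcases Nat.eq_zero_or_pos n with rfl | hn
  · simpa using Real.rpow_nonneg le_rfl _
  have hw : ∑ _i : Fin n, (n : ℝ)⁻¹ = 1 := by
    have : (n : ℝ) ≠ 0 := by positivity
    simp [this]
  have hmean := Real.arith_mean_le_rpow_mean Finset.univ (fun _ : Fin n => (n : ℝ)⁻¹)
    (fun i => |sortedDesc (eigs A) i - sortedDesc (eigs B) i|) (fun _ _ => by positivity) hw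
    (fun _ _ => abs_nonneg _) hp1
  rw [← Finset.mul_sum, ← Finset.mul_sum] at hmean
  refine le_trans ?_ hmean
  gcongr
  exact (norm_sum_le _ _).trans (Finset.sum_le_sum fun i _ => norm_inv_sub_inv_le hz _ _)

/-- Lemma (spectral variation inequalities for `p ∈ [1,2]`). -/
theorem spectral_variation_p_ge_one
    (p : ℝ) (hp1 : 1 ≤ p) (hp2 : p ≤ 2) (n : ℕ) (A B : HermMat 𝕜 n) :
    -- Lidskii-type bound
    (∑ i, |sortedDesc (eigs A) i - sortedDesc (eigs B) i| ^ p ≤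
      ∑ i, |eigs (A - B) i| ^ p) ∧
    (∑ i, |eigs (A - B) i| ^ p ≤ matLpNormPow p (A - B)) ∧
    -- Wasserstein bound: `W_p(μ_A, μ_B) ≤ n^{-1/p} ‖A-B‖_{ℓ^p}`
    (∃ π : Measure (ℝ × ℝ),
      π.map Prod.fst = specMeasure A ∧ π.map Prod.snd = specMeasure B ∧
      (∫ q, |q.1 - q.2| ^ p ∂π) ^ (1/p) ≤
        ((n : ℝ) ^ (1/p))⁻¹ * (matLpNormPow p (A - B)) ^ (1/p)) ∧
    -- Stieltjes-transform distance bound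
    (∀ z : ℂ, 2 ≤ z.im →
      ‖stieltjesT (specMeasure A) z - stieltjesT (specMeasure B) z‖ ≤
        ((n : ℝ) ^ (1/p))⁻¹ * (matLpNormPow p (A - B)) ^ (1/p)) := by
  have hW := integral_sortedCoupling_rpow_le hp1 hp2 A B
  exact ⟨sum_abs_sortedDesc_sub_rpow_le hp1 A B,
    sum_abs_eigs_rpow_le (by linarith) hp2 (A - B),
    ⟨sortedCoupling A B, sortedCoupling_map_fst A B, sortedCoupling_map_snd A B, hW⟩,
    fun z hz => (norm_stieltjesT_sub_le hp1 A B hz).trans hW⟩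

end
end

section
/- Let α ≥ 1 and let ψ be the monotone rearrangement sending ν_1 to ν_α, so that ψ^{-1}(x) = − sgn(x) · log( Z_α^{-1} ∫_{|x|}^{+∞} e^{-u^α} du ) for x ∈ ℝ, where Z_α = ∫_0^∞ e^{-u^α} du normalizes μ_α. Then there is a constant γ > 0 depending only on α such that for every m ≥ 1, every ε ∈ (0,1), and all x, y ∈ ℝ with |x| ≤ m and |x − y| ≥ m/ε, one has | ψ^{-1}(x) − ψ^{-1}(y) | ≥ (1 − γ ε) |x − y|^α. -/
open MeasureTheory Filter Topology

noncomputable section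

/-- The normalizing constant `Z_α = ∫_0^∞ e^{-u^α} du`. -/
def Zalpha (α : ℝ) : ℝ := ∫ u in Set.Ioi (0 : ℝ), Real.exp (-u ^ α)

/-- The inverse `ψ⁻¹` of the monotone rearrangement sending `ν_1` to `ν_α`:
`ψ⁻¹(x) = - sgn(x) log ( Z_α⁻¹ ∫_{|x|}^∞ e^{-u^α} du )`. -/
def psiInv (α : ℝ) (x : ℝ) : ℝ :=
  -Real.sign x * Real.log ((Zalpha α)⁻¹ * ∫ u in Set.Ioi |x|, Real.exp (-u ^ α))

theorem integrableOn_exp_neg_rpow_Ioi {α t : ℝ} (hα : 0 < α) (ht : 0 ≤ t) :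
    IntegrableOn (fun u : ℝ => Real.exp (-u ^ α)) (Set.Ioi t) := by
  have h := integrableOn_rpow_mul_exp_neg_rpow (p := α) (s := 0) (by norm_num) hα
  simp only [Real.rpow_zero, one_mul] at h
  exact h.mono_set (Set.Ioi_subset_Ioi ht)

/-- Since `u ↦ u ^ α` is superadditive on `[0, ∞)`, the tail beyond `t` is at most `e^{-t^α} Z_α`. -/
theorem tail_le_exp_neg_rpow_mul_Zalpha {α t : ℝ} (hα : 1 ≤ α) (ht : 0 ≤ t) :
    ∫ u in Set.Ioi t, Real.exp (-u ^ α) ≤ Real.exp (-t ^ α) * Zalpha α := by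
  have hα0 : 0 < α := by linarith
  have hmp : MeasurePreserving (fun v : ℝ => v + t) volume volume :=
    measurePreserving_add_right volume t
  have hemb : MeasurableEmbedding (fun v : ℝ => v + t) := measurableEmbedding_addRight t
  have hpre : (fun v : ℝ => v + t) ⁻¹' Set.Ioi t = Set.Ioi 0 := by
    ext v; simp
  have hint := integrableOn_exp_neg_rpow_Ioi hα0 ht
  rw [← hmp.integrableOn_comp_preimage hemb, hpre] at hint
  rw [← hmp.setIntegral_preimage_emb hemb, hpre, Zalpha, ← integral_const_mul]
  refine setIntegral_mono_on hint
    ((integrableOn_exp_neg_rpow_Ioi hα0 le_rfl).const_mul _) measurableSet_Ioi fun v hv => ?_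
  rw [← Real.exp_add, Real.exp_le_exp]
  have := Real.add_rpow_le_rpow_add (le_of_lt hv) ht hα
  linarith

theorem exp_neg_add_one_rpow_le_tail {α t : ℝ} (hα : 0 < α) (ht : 0 ≤ t) :
    Real.exp (-(t + 1) ^ α) ≤ ∫ u in Set.Ioi t, Real.exp (-u ^ α) := by
  have hint := integrableOn_exp_neg_rpow_Ioi hα ht
  have hsub : Set.Ioc t (t + 1) ⊆ Set.Ioi t := Set.Ioc_subset_Ioi_self
  have hconst := setIntegral_ge_of_const_le_real (μ := volume) (s := Set.Ioc t (t + 1))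
    (f := fun u : ℝ => Real.exp (-u ^ α)) (c := Real.exp (-(t + 1) ^ α))
    measurableSet_Ioc (by simp)
    (fun u hu => Real.exp_le_exp.2 (neg_le_neg
      (Real.rpow_le_rpow (ht.trans hu.1.le) hu.2 hα.le)))
    (hint.mono_set hsub)
  have hvol : volume.real (Set.Ioc t (t + 1)) = 1 := by simp
  rw [hvol, mul_one] at hconst
  exact hconst.trans (setIntegral_mono_set hint
    (Eventually.of_forall fun u => (Real.exp_pos _).le) hsub.eventuallyLE)

theorem Zalpha_pos {α : ℝ} (hα : 0 < α) : 0 < Zalpha α :=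
  (Real.exp_pos _).trans_le (exp_neg_add_one_rpow_le_tail hα le_rfl)

theorem tail_pos {α t : ℝ} (hα : 0 < α) (ht : 0 ≤ t) :
    0 < ∫ u in Set.Ioi t, Real.exp (-u ^ α) :=
  (Real.exp_pos _).trans_le (exp_neg_add_one_rpow_le_tail hα ht)

theorem rpow_le_neg_log_tail {α t : ℝ} (hα : 1 ≤ α) (ht : 0 ≤ t) :
    t ^ α ≤ -Real.log ((Zalpha α)⁻¹ * ∫ u in Set.Ioi t, Real.exp (-u ^ α)) := by
  have hα0 : 0 < α := by linarith
  have hZ := Zalpha_pos hα0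
  have hpos := mul_pos (inv_pos.2 hZ) (tail_pos hα0 ht)
  rw [le_neg, Real.log_le_iff_le_exp hpos, inv_mul_le_iff₀ hZ, mul_comm]
  exact tail_le_exp_neg_rpow_mul_Zalpha hα ht

theorem neg_log_tail_le {α t m : ℝ} (hα : 1 ≤ α) (ht : 0 ≤ t) (htm : t ≤ m) (hm : 1 ≤ m) :
    -Real.log ((Zalpha α)⁻¹ * ∫ u in Set.Ioi t, Real.exp (-u ^ α)) ≤
      (2 ^ α + |Real.log (Zalpha α)|) * m ^ α := by
  have hα0 : 0 < α := by linarith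
  have hZ := Zalpha_pos hα0
  have htail := tail_pos hα0 ht
  rw [Real.log_mul (inv_pos.2 hZ).ne' htail.ne', Real.log_inv]
  have hlog : -(t + 1) ^ α ≤ Real.log (∫ u in Set.Ioi t, Real.exp (-u ^ α)) :=
    (Real.le_log_iff_exp_le htail).2 (exp_neg_add_one_rpow_le_tail hα0 ht)
  have hpow : (t + 1) ^ α ≤ 2 ^ α * m ^ α := by
    rw [← Real.mul_rpow (by norm_num) (by linarith)]
    exact Real.rpow_le_rpow (by linarith) (by linarith) hα0.le
  have hone : 1 ≤ m ^ α := Real.one_le_rpow hm hα0.le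
  have habs : |Real.log (Zalpha α)| ≤ |Real.log (Zalpha α)| * m ^ α :=
    le_mul_of_one_le_right (abs_nonneg _) hone
  linarith [le_abs_self (Real.log (Zalpha α))]

theorem abs_psiInv_le {α x m : ℝ} (hα : 1 ≤ α) (hx : |x| ≤ m) (hm : 1 ≤ m) :
    |psiInv α x| ≤ (2 ^ α + |Real.log (Zalpha α)|) * m ^ α := by
  have hle := neg_log_tail_le hα (abs_nonneg x) hx hm
  have hge := (Real.rpow_nonneg (abs_nonneg x) α).trans (rpow_le_neg_log_tail hα (abs_nonneg x))
  rw [psiInv, abs_mul, ← abs_neg (Real.log _), abs_of_nonneg hge]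
  rcases Real.sign_apply_eq x with h | h | h <;> simp only [h] <;> norm_num <;> linarith

theorem rpow_abs_le_abs_psiInv {α : ℝ} (hα : 1 ≤ α) (y : ℝ) :
    |y| ^ α ≤ |psiInv α y| := by
  rcases eq_or_ne y 0 with rfl | hy
  · simp [Real.zero_rpow (by linarith : α ≠ 0)]
  have hge := rpow_le_neg_log_tail hα (abs_nonneg y)
  have hsign : |-Real.sign y| = 1 := by
    rcases Real.sign_apply_eq_of_ne_zero y hy with h | h <;> simp [h]
  rw [psiInv, abs_mul, hsign, one_mul]
  exact hge.trans (neg_le_abs _)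

/-- Lemma (sharp lower estimate on the large increments of the monotone
rearrangement, `α ≥ 1`). -/
theorem rearrangement_large_increments (α : ℝ) (hα : 1 ≤ α) :
    ∃ γ > (0 : ℝ), ∀ m : ℝ, 1 ≤ m → ∀ ε : ℝ, 0 < ε → ε < 1 →
      ∀ x y : ℝ, |x| ≤ m → m / ε ≤ |x - y| →
        (1 - γ * ε) * |x - y| ^ α ≤ |psiInv α x - psiInv α y| := by
  have hα0 : 0 < α := by linarith
  set C : ℝ := 2 ^ α + |Real.log (Zalpha α)| with hC
  have hC0 : 0 < C := by positivity
  refine ⟨α + C, by positivity, fun m hm ε hε hε1 x y hx hxy => ?_⟩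
  set D : ℝ := |x - y| with hD
  have hD0 : 0 ≤ D := abs_nonneg _
  have hmD : m ≤ ε * D := by
    rw [div_le_iff₀ hε] at hxy
    linarith
  have hy : (1 - ε) * D ≤ |y| := by
    have := abs_sub x y
    linarith
  have hyα : (1 - α * ε) * D ^ α ≤ |y| ^ α := by
    have hbern := one_add_mul_self_le_rpow_one_add (s := -ε) (by linarith) hα
    calc (1 - α * ε) * D ^ α ≤ (1 - ε) ^ α * D ^ α := by
          refine mul_le_mul_of_nonneg_right ?_ (Real.rpow_nonneg hD0 α)
          simpa [sub_eq_add_neg] using hbern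
      _ = ((1 - ε) * D) ^ α := (Real.mul_rpow (by linarith) hD0).symm
      _ ≤ |y| ^ α := Real.rpow_le_rpow (mul_nonneg (by linarith) hD0) hy hα0.le
  have hmα : m ^ α ≤ ε * D ^ α := by
    calc m ^ α ≤ (ε * D) ^ α := Real.rpow_le_rpow (by linarith) hmD hα0.le
      _ = ε ^ α * D ^ α := Real.mul_rpow hε.le hD0
      _ ≤ ε * D ^ α := by
          refine mul_le_mul_of_nonneg_right ?_ (Real.rpow_nonneg hD0 α)
          simpa using Real.rpow_le_rpow_of_exponent_ge hε hε1.le hα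
  have hψx := abs_psiInv_le hα hx hm
  have hψy := rpow_abs_le_abs_psiInv hα y
  have htri := abs_sub_abs_le_abs_sub (psiInv α y) (psiInv α x)
  rw [abs_sub_comm] at htri
  have hCm := mul_le_mul_of_nonneg_left hmα hC0.le
  linarith

end
end
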